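/- arXiv:0805.4126 — 2 statements merged into one kernel-verified Lean document; each statement's English description precedes it below -/
import Mathlib

section
/- Let n ≥ 2. Given n+3 points of ℙⁿ(ℂ) in linearly general position, there exists exactly one rational normal curve in ℙⁿ (as a subset of ℙⁿ) passing through all n+3 points. -/
noncomputable section

/-- Projective space `ℙⁿ(ℂ)`, the projectivization of `ℂ^{n+1}`. -/
abbrev PP (k : ℕ) := Projectivization ℂ (Fin (k + 1) → ℂ)

/-- The vector of the monomials `s^k t^(n-k)`, used to parametrize rational normal curves. -/
def veron (n : ℕ) (v : Fin 2 → ℂ) : Fin (n + 1) → ℂ :=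
  fun k => v 0 ^ (k : ℕ) * v 1 ^ (n - (k : ℕ))

/-- `C ⊆ ℙⁿ` is a rational normal curve if it is the image of `[s:t] ↦ [F₀(s,t):⋯:Fₙ(s,t)]`
for a basis `F₀,…,Fₙ` of the degree-`n` binary forms; such a basis is encoded by an
invertible matrix of coefficients applied to the monomial vector `veron`. -/
def IsRNC (n : ℕ) (C : Set (PP n)) : Prop :=
  ∃ M : Matrix (Fin (n + 1)) (Fin (n + 1)) ℂ, IsUnit M.det ∧
    C = {P : PP n | ∃ v : Fin 2 → ℂ, v ≠ 0 ∧ ∃ c : ℂ, c ≠ 0 ∧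
      P.rep = c • M.mulVec (veron n v)}

/-- Points of `ℙᵏ` are in linearly general position if every subset of them of size at
most `k+1` has linearly independent representative vectors. -/
def InGenPos {k m : ℕ} (Q : Fin m → PP k) : Prop :=
  ∀ S : Finset (Fin m), S.card ≤ k + 1 →
    LinearIndependent ℂ fun i : S => (Q i).rep

/-!
Take `n + 1` of the points as coordinate points. If a rational normal curve passes through them at
parameters `p₀, …, pₙ`, then its `i`-th coordinate is a form of degree `n` vanishing at all `pⱼ`
with `j ≠ i`, hence a multiple of the product of the linear forms `ℓⱼ` vanishing at `pⱼ`, `j ≠ i`.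
So the curve is the image of a line under the standard Cremona transformation `[xᵢ] ↦ [xᵢ⁻¹]`.
The transformation carries the two remaining points to two points of that line, which therefore is
determined. Conversely, the image of the line through those two points is a rational normal curve,
because general position makes that line miss the codimension two coordinate subspaces.
-/

open Finset Matrix Module
open scoped LinearAlgebra.Projectivization

namespace RationalNormalCurve

section TransversalPlane

variable {ι K : Type*} [Field K]

/-- A two-dimensional subspace whose nonzero vectors have at most one vanishing coordinate, that
is, a projective line missing the codimension two coordinate subspaces. -/
def IsTransversalPlane (W : Submodule K (ι → K)) : Prop :=
  finrank K W = 2 ∧ ∀ w ∈ W, ∀ i j, i ≠ j → w i = 0 → w j = 0 → w = 0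

lemma eq_zero_of_sum_smul_inv_apply_eq_zero {c : Fin 2 → ι → K} (hc : ∀ j i, c j i ≠ 0) {i k : ι}
    (hik : c 0 i * c 1 k ≠ c 0 k * c 1 i) {s : Fin 2 → K} (hi : (∑ j, s j • (c j)⁻¹) i = 0)
    (hk : (∑ j, s j • (c j)⁻¹) k = 0) : s = 0 := by
  have clear_denominators {l : ι} (hl : (∑ j, s j • (c j)⁻¹) l = 0) :
      s 0 * c 1 l + s 1 * c 0 l = 0 := by
    have hc0 := hc 0 l
    have hc1 := hc 1 l
    simp only [Fin.sum_univ_two, Pi.add_apply, Pi.smul_apply, Pi.inv_apply, smul_eq_mul] at hl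
    field_simp at hl
    linear_combination hl
  have h0 : s 0 * (c 0 i * c 1 k - c 0 k * c 1 i) = 0 := by
    linear_combination c 0 i * clear_denominators hk - c 0 k * clear_denominators hi
  have h1 : s 1 * (c 0 i * c 1 k - c 0 k * c 1 i) = 0 := by
    linear_combination c 1 k * clear_denominators hi - c 1 i * clear_denominators hk
  ext j
  fin_cases j
  · exact (mul_eq_zero.1 h0).resolve_right (sub_ne_zero.2 hik)
  · exact (mul_eq_zero.1 h1).resolve_right (sub_ne_zero.2 hik)

lemma isTransversalPlane_span_inv [Nontrivial ι] {c : Fin 2 → ι → K} (hc : ∀ j i, c j i ≠ 0)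
    (hdet : Pairwise fun i k ↦ c 0 i * c 1 k ≠ c 0 k * c 1 i) :
    IsTransversalPlane (Submodule.span K (Set.range fun j ↦ (c j)⁻¹)) := by
  constructor
  · obtain ⟨i, k, hik⟩ := exists_pair_ne ι
    have hli : LinearIndependent K fun j ↦ (c j)⁻¹ := Fintype.linearIndependent_iff.2 fun s hs ↦
      congrFun <| eq_zero_of_sum_smul_inv_apply_eq_zero hc (hdet hik)
        (congrFun hs i) (congrFun hs k)
    rw [finrank_span_eq_card hli, Fintype.card_fin]
  · intro w hw i k hik hi hk
    obtain ⟨s, rfl⟩ := (Submodule.mem_span_range_iff_exists_fun K).1 hw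
    simp [eq_zero_of_sum_smul_inv_apply_eq_zero hc (hdet hik) hi hk]

end TransversalPlane

section Cremona

variable {ι K : Type*} [Fintype ι] [DecidableEq ι] [Field K]

/-- The standard Cremona transformation `[xᵢ] ↦ [xᵢ⁻¹]`, in its polynomial form on vectors. -/
def cremona (x : ι → K) : ι → K := fun i ↦ ∏ j ∈ univ.erase i, x j

lemma cremona_mul (x y : ι → K) : cremona (x * y) = cremona x * cremona y :=
  funext fun _ ↦ prod_mul_distrib

lemma cremona_eq_smul_inv {x : ι → K} (hx : ∀ i, x i ≠ 0) : cremona x = (∏ i, x i) • x⁻¹ := by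
  ext i
  simp [cremona, ← prod_erase_mul univ x (mem_univ i), hx i]

lemma prod_smul_cremona_inv {x : ι → K} (hx : ∀ i, x i ≠ 0) :
    (∏ i, x i) • cremona x⁻¹ = x := by
  rw [cremona_eq_smul_inv (x := x⁻¹) fun i ↦ inv_ne_zero (hx i)]
  simp [smul_smul, mul_inv_cancel₀ (prod_ne_zero_iff.2 fun i _ ↦ hx i)]

lemma cremona_eq_single {x : ι → K} {i : ι} (hi : x i = 0) :
    cremona x = Pi.single i (cremona x i) := by
  ext k
  obtain rfl | hk := eq_or_ne k i
  · rw [Pi.single_eq_same]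
  · rw [Pi.single_eq_of_ne hk]
    exact prod_eq_zero (mem_erase.2 ⟨hk.symm, mem_univ i⟩) hi

lemma ne_zero_of_cremona_ne_zero [Nontrivial ι] {x : ι → K} (hx : ∀ i, cremona x i ≠ 0) (i : ι) :
    x i ≠ 0 := by
  obtain ⟨k, hk⟩ := exists_ne i
  exact prod_ne_zero_iff.1 (hx k) i (mem_erase.2 ⟨hk.symm, mem_univ i⟩)

lemma IsTransversalPlane.exists_cremona_eq_single {W : Submodule K (ι → K)}
    (hW : IsTransversalPlane W) (i : ι) :
    ∃ w ∈ W, w ≠ 0 ∧ ∃ d ≠ 0, cremona w = Pi.single i d := by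
  have hker : LinearMap.ker (LinearMap.proj i ∘ₗ W.subtype : W →ₗ[K] K) ≠ ⊥ :=
    LinearMap.ker_ne_bot_of_finrank_lt (by simp [hW.1])
  obtain ⟨⟨w, hwW⟩, hwi, hw0⟩ := Submodule.exists_mem_ne_zero_of_ne_bot hker
  replace hw0 : w ≠ 0 := by simpa using hw0
  replace hwi : w i = 0 := by simpa using hwi
  refine ⟨w, hwW, hw0, cremona w i, prod_ne_zero_iff.2 fun j hj hwj ↦ ?_, cremona_eq_single hwi⟩
  exact hw0 (hW.2 w hwW j i (ne_of_mem_erase hj) hwj hwi)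

end Cremona

section ScaledDualBasis

variable {ι K : Type*} [Fintype ι] [DecidableEq ι] [Field K] {N N' : Matrix ι ι K}
  {x : ι → ι → K} {d : ι → K}

lemma mul_transpose_eq_diagonal (hN : ∀ i, N *ᵥ x i = Pi.single i (d i)) :
    N * (of x)ᵀ = diagonal d := by
  ext i j
  change (N *ᵥ x j) i = _
  rw [hN, Pi.single_apply, diagonal_apply]
  split_ifs with hij
  · rw [hij]
  · rfl

lemma isUnit_mul_transpose_of_mulVec_eq_single (hd : ∀ i, d i ≠ 0)
    (hN : ∀ i, N *ᵥ x i = Pi.single i (d i)) : IsUnit (N * (of x)ᵀ) := by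
  rw [mul_transpose_eq_diagonal hN, isUnit_diagonal, Pi.isUnit_iff]
  exact fun i ↦ (hd i).isUnit

lemma isUnit_of_mulVec_eq_single (hd : ∀ i, d i ≠ 0)
    (hN : ∀ i, N *ᵥ x i = Pi.single i (d i)) : IsUnit N :=
  isUnit_of_mul_isUnit_left (isUnit_mul_transpose_of_mulVec_eq_single hd hN)

lemma eq_of_mulVec_eq_single (hd : ∀ i, d i ≠ 0) (hN : ∀ i, N *ᵥ x i = Pi.single i (d i))
    (hN' : ∀ i, N' *ᵥ x i = Pi.single i (d i)) : N = N' :=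
  have hx : IsUnit (of x)ᵀ :=
    isUnit_of_mul_isUnit_right (isUnit_mul_transpose_of_mulVec_eq_single hd hN)
  hx.mul_left_injective <|
    (mul_transpose_eq_diagonal hN).trans (mul_transpose_eq_diagonal hN').symm

end ScaledDualBasis

section BinaryForms

variable {K : Type*} [Field K] {n : ℕ}

/-- The vector of binary monomials `s ^ k * t ^ (n - k)` of degree `n`; this is `veron` over an
arbitrary field. -/
def monomials (n : ℕ) (v : Fin 2 → K) : Fin (n + 1) → K :=
  fun k ↦ v 0 ^ (k : ℕ) * v 1 ^ (n - (k : ℕ))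

lemma monomials_smul (n : ℕ) (c : K) (v : Fin 2 → K) :
    monomials n (c • v) = c ^ n • monomials n v := by
  ext k
  have hpow : c ^ n = c ^ (k : ℕ) * c ^ (n - (k : ℕ)) := by
    rw [← pow_add, Nat.add_sub_of_le k.is_le]
  simp only [monomials, Pi.smul_apply, smul_eq_mul, hpow, mul_pow]
  ring

lemma exists_prod_linear_eq_dotProduct_monomials {ι : Type*} {s : Finset ι} (hs : #s = n)
    (α β : ι → K) :
    ∃ m, ∀ v : Fin 2 → K, ∏ j ∈ s, (α j * v 0 + β j * v 1) = m ⬝ᵥ monomials n v := by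
  classical
  refine ⟨fun k ↦ ∑ t ∈ s.powersetCard k, (∏ i ∈ t, α i) * ∏ i ∈ s \ t, β i, fun v ↦ ?_⟩
  rw [prod_add, sum_powerset, hs, sum_range]
  refine sum_congr rfl fun k _ ↦ ?_
  rw [sum_mul]
  refine sum_congr rfl fun t ht ↦ ?_
  obtain ⟨hts, htk⟩ := mem_powersetCard.1 ht
  simp only [monomials, prod_mul_distrib, prod_const, card_sdiff_of_subset hts, hs, htk]
  ring

lemma exists_mulVec_monomials_eq_cremona (L : (Fin 2 → K) →ₗ[K] Fin (n + 1) → K) :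
    ∃ X : Matrix (Fin (n + 1)) (Fin (n + 1)) K, ∀ v, X *ᵥ monomials n v = cremona (L v) := by
  have hrow (i : Fin (n + 1)) : ∃ m, ∀ v, cremona (L v) i = m ⬝ᵥ monomials n v := by
    have hcard : #(univ.erase i) = n := by simp
    obtain ⟨m, hm⟩ := exists_prod_linear_eq_dotProduct_monomials hcard
      (fun j ↦ L (Pi.single 0 1) j) (fun j ↦ L (Pi.single 1 1) j)
    refine ⟨m, fun v ↦ (prod_congr rfl fun j _ ↦ ?_).trans (hm v)⟩
    rw [← LinearMap.toMatrix'_mulVec L v]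
    simp [mulVec, dotProduct, LinearMap.toMatrix'_apply]
  choose X hX using hrow
  exact ⟨of X, fun v ↦ funext fun i ↦ (hX i v).symm⟩

/-- The linear form `v ↦ det (p, v)`, whose zeros are the multiples of `p`. -/
def vanishingForm (p : Fin 2 → K) : (Fin 2 → K) →ₗ[K] K :=
  p 0 • LinearMap.proj 1 - p 1 • LinearMap.proj 0

lemma vanishingForm_self (p : Fin 2 → K) : vanishingForm p p = 0 := by
  simp [vanishingForm, mul_comm]

lemma exists_smul_eq_of_vanishingForm_eq_zero {p v : Fin 2 → K} (hp : p ≠ 0)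
    (h : vanishingForm p v = 0) : ∃ c : K, c • p = v := by
  have hdet : (of ![p, v]).det = 0 := by
    simpa [vanishingForm, det_fin_two, mul_comm] using h
  have hdep : ¬ LinearIndependent K ![p, v] := fun hli ↦
    ((isUnit_iff_isUnit_det _).1 (linearIndependent_rows_iff_isUnit.1 hli)).ne_zero hdet
  simpa [LinearIndependent.pair_iff' hp] using hdep

lemma injective_pi_vanishingForm {ι : Type*} [Nontrivial ι] {p : ι → Fin 2 → K}
    (hp : ∀ i, p i ≠ 0) (hpp : Pairwise fun i j ↦ vanishingForm (p i) (p j) ≠ 0) :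
    Function.Injective (LinearMap.pi fun i ↦ vanishingForm (p i)) := by
  rw [← LinearMap.ker_eq_bot, LinearMap.ker_eq_bot']
  intro v hv
  obtain ⟨i, j, hij⟩ := exists_pair_ne ι
  obtain ⟨c, rfl⟩ := exists_smul_eq_of_vanishingForm_eq_zero (hp j) (congrFun hv j)
  have hc : c * vanishingForm (p i) (p j) = 0 := by simpa using congrFun hv i
  rw [(mul_eq_zero.1 hc).resolve_right (hpp hij), zero_smul]

lemma vanishingForm_ne_zero_of_mulVec_eq_single {N : Matrix (Fin (n + 1)) (Fin (n + 1)) K}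
    {p : Fin (n + 1) → Fin 2 → K} {d : Fin (n + 1) → K} (hp : ∀ i, p i ≠ 0) (hd : ∀ i, d i ≠ 0)
    (hN : ∀ i, N *ᵥ monomials n (p i) = Pi.single i (d i)) :
    Pairwise fun i j ↦ vanishingForm (p i) (p j) ≠ 0 := by
  intro i j hij h
  obtain ⟨c, hc⟩ := exists_smul_eq_of_vanishingForm_eq_zero (hp i) h
  have hj : (N *ᵥ monomials n (c • p i)) j = 0 := by
    simp [monomials_smul, mulVec_smul, hN, hij.symm]
  rw [hc, hN, Pi.single_eq_same] at hj
  exact hd j hj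

lemma exists_eq_smul_cremona (hn : n ≠ 0) {N : Matrix (Fin (n + 1)) (Fin (n + 1)) K}
    {p : Fin (n + 1) → Fin 2 → K} {d : Fin (n + 1) → K} (hp : ∀ i, p i ≠ 0) (hd : ∀ i, d i ≠ 0)
    (hN : ∀ i, N *ᵥ monomials n (p i) = Pi.single i (d i)) :
    ∃ L : (Fin 2 → K) →ₗ[K] Fin (n + 1) → K, Function.Injective L ∧
      ∃ κ : K, κ ≠ 0 ∧ ∀ v, N *ᵥ monomials n v = κ • cremona (L v) := by
  have : Nontrivial (Fin (n + 1)) := Fin.nontrivial_iff_two_le.2 (by lia)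
  have hpp := vanishingForm_ne_zero_of_mulVec_eq_single hp hd hN
  let ℓ : (Fin 2 → K) →ₗ[K] Fin (n + 1) → K := LinearMap.pi fun i ↦ vanishingForm (p i)
  obtain ⟨X, hX⟩ := exists_mulVec_monomials_eq_cremona ℓ
  let δ : Fin (n + 1) → K := fun i ↦ cremona (ℓ (p i)) i
  have hδ (i) : δ i ≠ 0 := prod_ne_zero_iff.2 fun j hj ↦ hpp (ne_of_mem_erase hj)
  let c : Fin (n + 1) → K := d / δ
  have hc (i) : c i ≠ 0 := div_ne_zero (hd i) (hδ i)
  have hNX : N = diagonal c * X := eq_of_mulVec_eq_single hd hN fun i ↦ by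
    have hℓ : ℓ (p i) i = 0 := vanishingForm_self (p i)
    rw [← mulVec_mulVec, hX, cremona_eq_single hℓ, diagonal_mulVec_single]
    simp [c, δ, div_mul_cancel₀ _ (hδ i)]
  have hcu : IsUnit c⁻¹ := Pi.isUnit_iff.2 fun i ↦ (inv_ne_zero (hc i)).isUnit
  refine ⟨LinearMap.mulLeft K c⁻¹ ∘ₗ ℓ,
    hcu.mul_right_injective.comp (injective_pi_vanishingForm hp hpp),
    ∏ i, c i, prod_ne_zero_iff.2 fun i _ ↦ hc i, fun v ↦ ?_⟩
  change _ = _ • cremona (c⁻¹ * ℓ v)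
  rw [cremona_mul, ← smul_mul_assoc, prod_smul_cremona_inv hc, hNX, ← mulVec_mulVec, hX]
  ext i
  rw [mulVec_diagonal, Pi.mul_apply]

end BinaryForms

section Curves

variable {K : Type*} [Field K] {n : ℕ}

/-- The image of `[s : t] ↦ [F₀(s,t) : ⋯ : Fₙ(s,t)]`, where the rows of `M` are the coefficient
vectors of the forms `Fᵢ` of degree `n`. -/
def parametrizedCurve (M : Matrix (Fin (n + 1)) (Fin (n + 1)) K) :
    Set (ℙ K (Fin (n + 1) → K)) :=
  {P | ∃ v : Fin 2 → K, v ≠ 0 ∧ ∃ c : K, c ≠ 0 ∧ P.rep = c • M *ᵥ monomials n v}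

/-- Rational normal curves over an arbitrary field; this is `IsRNC` for `K = ℂ`. -/
def IsRationalNormalCurve (C : Set (ℙ K (Fin (n + 1) → K))) : Prop :=
  ∃ M : Matrix (Fin (n + 1)) (Fin (n + 1)) K, IsUnit M.det ∧ C = parametrizedCurve M

/-- The image under the Cremona transformation of the projective line `ℙ(W)`, where the columns of
`A` are taken as the coordinate points. -/
def cremonaImage (A : Matrix (Fin (n + 1)) (Fin (n + 1)) K)
    (W : Submodule K (Fin (n + 1) → K)) : Set (ℙ K (Fin (n + 1) → K)) :=
  {P | ∃ w ∈ W, w ≠ 0 ∧ ∃ c : K, c ≠ 0 ∧ P.rep = c • A *ᵥ cremona w}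

variable {A X : Matrix (Fin (n + 1)) (Fin (n + 1)) K} {W : Submodule K (Fin (n + 1) → K)}

lemma parametrizedCurve_mul_eq_cremonaImage {L : (Fin 2 → K) →ₗ[K] Fin (n + 1) → K}
    (hL : Function.Injective L) {κ : K} (hκ : κ ≠ 0)
    (hX : ∀ v, X *ᵥ monomials n v = κ • cremona (L v)) :
    parametrizedCurve (A * X) = cremonaImage A (LinearMap.range L) := by
  have hAX (c : K) (v : Fin 2 → K) :
      c • (A * X) *ᵥ monomials n v = (c * κ) • A *ᵥ cremona (L v) := by
    rw [← mulVec_mulVec, hX, mulVec_smul, smul_smul]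
  ext P
  constructor
  · rintro ⟨v, hv, c, hc, hP⟩
    exact ⟨L v, ⟨v, rfl⟩, (map_ne_zero_iff L hL).2 hv, c * κ, mul_ne_zero hc hκ,
      hP.trans (hAX c v)⟩
  · rintro ⟨_, ⟨v, rfl⟩, hv, c, hc, hP⟩
    refine ⟨v, (map_ne_zero_iff L hL).1 hv, c / κ, div_ne_zero hc hκ, ?_⟩
    rw [hP, hAX, div_mul_cancel₀ _ hκ]

lemma isRationalNormalCurve_cremonaImage (hA : IsUnit A.det) (hW : IsTransversalPlane W) :
    IsRationalNormalCurve (cremonaImage A W) := by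
  let e : (Fin 2 → K) ≃ₗ[K] W := LinearEquiv.ofFinrankEq _ _ (by simp [hW.1])
  let L : (Fin 2 → K) →ₗ[K] Fin (n + 1) → K := W.subtype ∘ₗ e
  have hL : Function.Injective L := W.injective_subtype.comp e.injective
  have hLW : LinearMap.range L = W := by simp [L, LinearMap.range_comp]
  obtain ⟨X, hX⟩ := exists_mulVec_monomials_eq_cremona L
  have hXu : IsUnit X := by
    choose w hwW _ d hd hw using hW.exists_cremona_eq_single
    refine isUnit_of_mulVec_eq_single hd (x := fun i ↦ monomials n (e.symm ⟨w i, hwW i⟩)) fun i ↦ ?_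
    rw [hX, ← hw i]
    simp [L]
  refine ⟨A * X, ?_, ?_⟩
  · rw [det_mul]
    exact hA.mul ((isUnit_iff_isUnit_det X).1 hXu)
  · rw [parametrizedCurve_mul_eq_cremonaImage hL one_ne_zero (by simpa using hX), hLW]

lemma IsRationalNormalCurve.exists_eq_cremonaImage (hn : n ≠ 0)
    {C : Set (ℙ K (Fin (n + 1) → K))} (hC : IsRationalNormalCurve C) (hA : IsUnit A.det)
    {P : Fin (n + 1) → ℙ K (Fin (n + 1) → K)} (hP : ∀ i, (P i).rep = A.col i)
    (hPC : ∀ i, P i ∈ C) :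
    ∃ W : Submodule K (Fin (n + 1) → K), finrank K W = 2 ∧ C = cremonaImage A W := by
  obtain ⟨M, -, rfl⟩ := hC
  choose p hp c hc hpc using hPC
  have hN (i) : (A⁻¹ * M) *ᵥ monomials n (p i) = Pi.single i (c i)⁻¹ := by
    have hMp : M *ᵥ monomials n (p i) = (c i)⁻¹ • A *ᵥ Pi.single i 1 := by
      rw [mulVec_single_one, ← hP, hpc, inv_smul_smul₀ (hc i)]
    rw [← mulVec_mulVec, hMp, mulVec_smul, mulVec_mulVec, nonsing_inv_mul _ hA, one_mulVec,
      ← Pi.single_smul, smul_eq_mul, mul_one]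
  obtain ⟨L, hL, κ, hκ, hX⟩ := exists_eq_smul_cremona hn hp (fun i ↦ inv_ne_zero (hc i)) hN
  refine ⟨LinearMap.range L, by simp [LinearMap.finrank_range_of_inj hL], ?_⟩
  rw [← parametrizedCurve_mul_eq_cremonaImage hL hκ hX, mul_nonsing_inv_cancel_left _ _ hA]

lemma mem_cremonaImage_of_rep_eq_col (hW : IsTransversalPlane W) {P : ℙ K (Fin (n + 1) → K)}
    {i : Fin (n + 1)} (hP : P.rep = A.col i) : P ∈ cremonaImage A W := by
  obtain ⟨w, hwW, hw0, d, hd, hw⟩ := hW.exists_cremona_eq_single i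
  refine ⟨w, hwW, hw0, d⁻¹, inv_ne_zero hd, ?_⟩
  rw [hP, hw, ← mulVec_smul, ← Pi.single_smul, smul_eq_mul, inv_mul_cancel₀ hd, mulVec_single_one]

lemma mem_cremonaImage_iff (hn : n ≠ 0) (hA : IsUnit A.det) {a : Fin (n + 1) → K}
    (ha : ∀ i, a i ≠ 0) {P : ℙ K (Fin (n + 1) → K)} (hP : P.rep = A *ᵥ a) :
    P ∈ cremonaImage A W ↔ a⁻¹ ∈ W := by
  have : Nontrivial (Fin (n + 1)) := Fin.nontrivial_iff_two_le.2 (by lia)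
  constructor
  · rintro ⟨w, hwW, -, c, -, hw⟩
    have haw : a = c • cremona w := by
      apply mulVec_injective_of_isUnit ((isUnit_iff_isUnit_det A).2 hA)
      rw [← hP, hw, mulVec_smul]
    have hw0 : ∀ i, w i ≠ 0 := ne_zero_of_cremona_ne_zero fun i hi ↦ ha i (by simp [haw, hi])
    have hainv : a⁻¹ = (c * ∏ i, w i)⁻¹ • w := by
      rw [haw, cremona_eq_smul_inv hw0, smul_smul]
      ext i
      simp only [Pi.inv_apply, Pi.smul_apply, smul_eq_mul, mul_inv, inv_inv]
    exact hainv ▸ W.smul_mem _ hwW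
  · intro haW
    refine ⟨a⁻¹, haW, fun h ↦ inv_ne_zero (ha 0) (congrFun h 0), ∏ i, a i,
      prod_ne_zero_iff.2 fun i _ ↦ ha i, ?_⟩
    rw [hP, ← mulVec_smul, prod_smul_cremona_inv ha]

end Curves

section GeneralPosition

variable {K : Type*} [Field K] {n : ℕ}

/-- Linearly general position over an arbitrary field and for an arbitrary family; this is
`InGenPos` for `K = ℂ`. -/
def InLinearlyGeneralPosition {ι : Type*} (Q : ι → ℙ K (Fin (n + 1) → K)) : Prop :=
  ∀ S : Finset ι, #S ≤ n + 1 → LinearIndependent K fun i : S ↦ (Q i).rep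

lemma InLinearlyGeneralPosition.linearIndependent_comp {ι κ : Type*} [Fintype κ]
    {Q : ι → ℙ K (Fin (n + 1) → K)} (hQ : InLinearlyGeneralPosition Q) (f : κ ↪ ι)
    (hκ : Fintype.card κ ≤ n + 1) : LinearIndependent K fun i ↦ (Q (f i)).rep :=
  (hQ (univ.map f) (by simpa using hκ)).comp (fun i ↦ ⟨f i, by simp⟩)
    fun i j hij ↦ f.injective (congrArg Subtype.val hij)

lemma InLinearlyGeneralPosition.eq_zero_of_sum_smul_rep_eq_zero {ι : Type*} [Fintype ι]
    {Q : ι → ℙ K (Fin (n + 1) → K)} (hQ : InLinearlyGeneralPosition Q)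
    (hι : Fintype.card ι ≤ n + 3) {g : ι → K} (hg : ∑ i, g i • (Q i).rep = 0) {i j : ι}
    (hij : i ≠ j) (hi : g i = 0) (hj : g j = 0) : g = 0 := by
  classical
  have hcard : #({i, j} : Finset ι)ᶜ ≤ n + 1 := by rw [card_compl, card_pair hij]; lia
  have hli : LinearIndepOn K (fun k ↦ (Q k).rep) ↑({i, j} : Finset ι)ᶜ := hQ _ hcard
  have hzero : ∀ k ∉ ({i, j} : Finset ι)ᶜ, g k = 0 := by
    simp only [mem_compl, not_not, mem_insert, mem_singleton]
    rintro k (rfl | rfl) <;> assumption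
  have hsum : ∑ k ∈ {i, j}ᶜ, g k • (Q k).rep = 0 := by
    rw [← hg]
    exact sum_subset (subset_univ _) fun k _ hk ↦ by rw [hzero k hk, zero_smul]
  ext k
  exact (em _).elim (linearIndepOn_finset_iff.1 hli g hsum k) (hzero k)

/-- The vectors `c 0`, `c 1` are the coordinates of the last two points with respect to the first
`n + 1` points, which are the columns of `A`. -/
structure IsFrame (Q : Fin (n + 1 + 2) → ℙ K (Fin (n + 1) → K))
    (A : Matrix (Fin (n + 1)) (Fin (n + 1)) K) (c : Fin 2 → Fin (n + 1) → K) : Prop where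
  isUnit_det : IsUnit A.det
  rep_castAdd (i : Fin (n + 1)) : (Q (Fin.castAdd 2 i)).rep = A.col i
  rep_natAdd (j : Fin 2) : (Q (Fin.natAdd (n + 1) j)).rep = A *ᵥ c j

variable {Q : Fin (n + 1 + 2) → ℙ K (Fin (n + 1) → K)}
  {A : Matrix (Fin (n + 1)) (Fin (n + 1)) K} {c : Fin 2 → Fin (n + 1) → K}

lemma InLinearlyGeneralPosition.exists_isFrame (hQ : InLinearlyGeneralPosition Q) :
    ∃ A c, IsFrame Q A c := by
  let A : Matrix (Fin (n + 1)) (Fin (n + 1)) K := (of fun i ↦ (Q (Fin.castAdd 2 i)).rep)ᵀ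
  have hA : IsUnit A := linearIndependent_cols_iff_isUnit.1 <|
    hQ.linearIndependent_comp (Fin.castAddEmb 2) (by simp)
  choose c hc using fun j ↦ (mulVec_surjective_iff_isUnit.2 hA) (Q (Fin.natAdd (n + 1) j)).rep
  exact ⟨A, c, (isUnit_iff_isUnit_det A).1 hA, fun _ ↦ rfl, fun j ↦ (hc j).symm⟩

namespace IsFrame

lemma sum_append_smul_rep (h : IsFrame Q A c) (s : Fin 2 → K) :
    ∑ i, Fin.append (∑ j, s j • c j) (-s) i • (Q i).rep = 0 := by
  have hcol : ∑ i, (∑ j, s j • c j) i • A.col i = ∑ j, s j • A *ᵥ c j := by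
    simp_rw [← mulVec_smul]
    rw [← mulVec_sum, mulVec_eq_sum]
    simp only [op_smul_eq_smul, ← row_apply', row_transpose]
  simp only [Fin.sum_univ_add, Fin.append_left, Fin.append_right, h.rep_castAdd, h.rep_natAdd,
    hcol, Pi.neg_apply, neg_smul, sum_neg_distrib, add_neg_cancel]

lemma eq_zero_of_append_eq_zero (h : IsFrame Q A c) (hQ : InLinearlyGeneralPosition Q)
    (s : Fin 2 → K) {i k : Fin (n + 1 + 2)} (hik : i ≠ k)
    (hi : Fin.append (∑ j, s j • c j) (-s) i = 0) (hk : Fin.append (∑ j, s j • c j) (-s) k = 0) :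
    s = 0 := by
  have h0 := hQ.eq_zero_of_sum_smul_rep_eq_zero (by simp) (h.sum_append_smul_rep s) hik hi hk
  ext j
  simpa using congrFun h0 (Fin.natAdd (n + 1) j)

lemma coord_ne_zero (h : IsFrame Q A c) (hQ : InLinearlyGeneralPosition Q) (j : Fin 2)
    (i : Fin (n + 1)) : c j i ≠ 0 := by
  intro hji
  obtain ⟨k, hk⟩ := exists_ne j
  have hik : Fin.castAdd 2 i ≠ Fin.natAdd (n + 1) k := by
    simp only [ne_eq, Fin.ext_iff, Fin.val_castAdd, Fin.val_natAdd]
    lia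
  have hs := h.eq_zero_of_append_eq_zero hQ (Pi.single j 1) hik
    (by simp [Pi.single_apply, hji]) (by simp [hk])
  simpa using congrFun hs j

lemma pairwise_minor_ne_zero (h : IsFrame Q A c) (hQ : InLinearlyGeneralPosition Q) :
    Pairwise fun i k ↦ c 0 i * c 1 k ≠ c 0 k * c 1 i := by
  intro i k hik hminor
  have hs := h.eq_zero_of_append_eq_zero hQ ![c 1 i, -c 0 i] (i := Fin.castAdd 2 i)
    (k := Fin.castAdd 2 k) (by simpa using hik) (by simp [mul_comm])
    (by simp [mul_comm (c 1 i), hminor])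
  exact h.coord_ne_zero hQ 1 i (by simpa using congrFun hs 0)

end IsFrame

end GeneralPosition

end RationalNormalCurve

open RationalNormalCurve in
theorem veronese_theorem_general {K : Type*} [Field K] {n : ℕ} (hn : n ≠ 0)
    (Q : Fin (n + 3) → ℙ K (Fin (n + 1) → K)) (hQ : InLinearlyGeneralPosition Q) :
    ∃! C : Set (ℙ K (Fin (n + 1) → K)), IsRationalNormalCurve C ∧ ∀ i, Q i ∈ C := by
  obtain ⟨A, c, hA⟩ := hQ.exists_isFrame
  have hc := hA.coord_ne_zero hQ
  have : Nontrivial (Fin (n + 1)) := Fin.nontrivial_iff_two_le.2 (by lia)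
  have hW := isTransversalPlane_span_inv hc (hA.pairwise_minor_ne_zero hQ)
  have mem_iff (j : Fin 2) (W : Submodule K (Fin (n + 1) → K)) :
      Q (Fin.natAdd (n + 1) j) ∈ cremonaImage A W ↔ (c j)⁻¹ ∈ W :=
    mem_cremonaImage_iff hn hA.isUnit_det (hc j) (hA.rep_natAdd j)
  refine ⟨cremonaImage A (Submodule.span K (Set.range fun j ↦ (c j)⁻¹)),
    ⟨isRationalNormalCurve_cremonaImage hA.isUnit_det hW, ?_⟩, ?_⟩
  · refine Fin.addCases (m := n + 1) (n := 2) (fun i ↦ ?_) fun j ↦ ?_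
    · exact mem_cremonaImage_of_rep_eq_col hW (hA.rep_castAdd i)
    · exact (mem_iff j _).2 (Submodule.subset_span ⟨j, rfl⟩)
  · rintro C ⟨hC, hQC⟩
    obtain ⟨W, hW2, rfl⟩ :=
      hC.exists_eq_cremonaImage hn hA.isUnit_det hA.rep_castAdd fun i ↦ hQC _
    have hle : Submodule.span K (Set.range fun j ↦ (c j)⁻¹) ≤ W :=
      Submodule.span_le.2 <| Set.range_subset_iff.2 fun j ↦ (mem_iff j W).1 (hQC _)
    rw [Submodule.eq_of_le_of_finrank_eq hle (hW.1.trans hW2.symm)]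

/-- Veronese's theorem: through `n+3` points of `ℙⁿ` (`n ≥ 2`) in linearly general
position there passes exactly one rational normal curve. -/
theorem veronese_theorem (n : ℕ) (hn : 2 ≤ n) (Q : Fin (n + 3) → PP n)
    (hQ : InGenPos Q) :
    ∃! C : Set (PP n), IsRNC n C ∧ ∀ i, Q i ∈ C :=
  veronese_theorem_general (by lia) Q hQ

end
end

section
/- Let n ≥ 3 and p ≥ 1, l ≥ 0 be integers with p + l = n + 3. Consider generic configurations in ℙⁿ(ℂ) consisting of p points and l linear subspaces of dimension n−2. If (p,l) ∈ {(n+3,0), (n+2,1), (3,n), (2,n+1), (1,n+2)}, then generically there exists a unique rational normal curve passing through the p points and meeting each (n−2)-dimensional subspace in exactly n−1 distinct points. If p ≥ 4 and l ≥ 2, then generically no such rational normal curve exists. -/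
noncomputable section

/-- The linear subspace of `ℙⁿ` given as the projectivization of the column span of a matrix. -/
def projSet {n m : ℕ} (A : Matrix (Fin (n + 1)) (Fin m) ℂ) : Set (PP n) :=
  {P : PP n | P.rep ∈ Submodule.span ℂ (Set.range fun j => fun r => A r j)}

/-- A property `Q` of configurations of `p` points (rank-one `(n+1)×1` matrices) and `l`
codimension-two subspaces (rank-`(n-1)` `(n+1)×(n-1)` matrices) holds generically:
there is a nonzero polynomial in the matrix entries such that `Q` holds at every
full-rank tuple where the polynomial does not vanish. -/
def GenHoldsPtsCodim2 (n p l : ℕ)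
    (Q : (Fin p → Matrix (Fin (n + 1)) (Fin 1) ℂ) →
         (Fin l → Matrix (Fin (n + 1)) (Fin (n - 1)) ℂ) → Prop) : Prop :=
  ∃ F : MvPolynomial ((Fin p × Fin (n + 1) × Fin 1) ⊕ (Fin l × Fin (n + 1) × Fin (n - 1))) ℂ,
    F ≠ 0 ∧ ∀ P B, (∀ i, (P i).rank = 1) → (∀ j, (B j).rank = n - 1) →
      MvPolynomial.eval
        (Sum.elim (fun q => P q.1 q.2.1 q.2.2) (fun q => B q.1 q.2.1 q.2.2)) F ≠ 0 →
      Q P B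

/-!
Write `n = m + 1` and fix a point `u`.  For a general endomorphism `θ` of `ℂⁿ⁺¹`, the eigenvectors
of `θ` modulo `u` form a rational normal curve through `u`: in a suitable basis ending with `u`,
`θ` is a nilpotent shift modulo `u`.  Every rational normal curve through `u` arises in this way.
It contains `z` when `θ z ∈ ⟨z, u⟩`, and since an `(n - 1)`-secant subspace of codimension two is
spanned by points of the curve, it is invariant under `θ` modulo `u`.  These conditions are linear
in `θ`.  For `n + 3` points and subspaces in total they generically leave a line of solutions, up to
the constants and the endomorphisms with values in `⟨u⟩`, as soon as they do so for one
configuration, which is taken on the standard curve.  There one studies the dual action of `θ` on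
the polynomials of degree at most `m`: invariance of the secant spaces makes this action scalar at
sufficiently many points for it to be the multiplication by a linear polynomial.

For the nonexistence, the projection from an `(n - 1)`-secant subspace of codimension two identifies
the curve with `ℙ¹`.  Two such subspaces therefore give the same cross ratio of the images of four
points of the curve, which fails generically.
-/

section

open Polynomial Matrix

section Cone

variable {n : ℕ}

lemma veron_affine (x : ℂ) (k : Fin (n + 1)) : veron n ![x, 1] k = x ^ (k : ℕ) := by
  simp [veron]

lemma veron_infinity : veron n ![1, 0] = Pi.single (Fin.last n) 1 := by
  ext k
  obtain rfl | hk := eq_or_ne k (Fin.last n)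
  · simp [veron]
  · have : n - (k : ℕ) ≠ 0 := by have := Fin.val_lt_last hk; omega
    simp [veron, hk, this]

lemma veron_smul (c : ℂ) (v : Fin 2 → ℂ) : veron n (c • v) = c ^ n • veron n v := by
  ext k
  have hk : c ^ n = c ^ (k : ℕ) * c ^ (n - (k : ℕ)) := by
    rw [← pow_add, Nat.add_sub_cancel' (Nat.lt_succ_iff.mp k.2)]
  simp only [veron, Pi.smul_apply, smul_eq_mul, mul_pow, hk]
  ring

lemma eq_smul_affine_or_infinity {v : Fin 2 → ℂ} (hv : v ≠ 0) :
    (∃ c x : ℂ, c ≠ 0 ∧ v = c • ![x, 1]) ∨ ∃ c : ℂ, c ≠ 0 ∧ v = c • ![1, 0] := by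
  by_cases h : v 1 = 0
  · refine .inr ⟨v 0, fun h0 => hv ?_, ?_⟩ <;> ext i <;> fin_cases i <;> simp [*]
  · refine .inl ⟨v 1, v 0 / v 1, h, ?_⟩
    ext i; fin_cases i <;> simp [mul_div_cancel₀, h]

/-- The nonzero vectors of `ℂ^{n+1}` lying over the rational normal curve with coefficient
matrix `M`. -/
def cone (M : Matrix (Fin (n + 1)) (Fin (n + 1)) ℂ) : Set (Fin (n + 1) → ℂ) :=
  {z | ∃ v : Fin 2 → ℂ, v ≠ 0 ∧ ∃ c : ℂ, c ≠ 0 ∧ z = c • M *ᵥ veron n v}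

/-- The image of `[s:t] ↦ M ν(s,t)` in projective space. -/
def curve (M : Matrix (Fin (n + 1)) (Fin (n + 1)) ℂ) : Set (PP n) :=
  {P | P.rep ∈ cone M}

lemma isRNC_iff_exists_curve {C : Set (PP n)} :
    IsRNC n C ↔ ∃ M : Matrix (Fin (n + 1)) (Fin (n + 1)) ℂ, IsUnit M.det ∧ C = curve M :=
  Iff.rfl

variable {M : Matrix (Fin (n + 1)) (Fin (n + 1)) ℂ}

lemma mem_cone_iff {z : Fin (n + 1) → ℂ} :
    z ∈ cone M ↔ (∃ c x : ℂ, c ≠ 0 ∧ z = c • M *ᵥ veron n ![x, 1]) ∨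
      ∃ c : ℂ, c ≠ 0 ∧ z = c • M *ᵥ Pi.single (Fin.last n) 1 := by
  constructor
  · rintro ⟨v, hv, c, hc, rfl⟩
    rcases eq_smul_affine_or_infinity hv with ⟨d, x, hd, rfl⟩ | ⟨d, hd, rfl⟩
    · exact .inl ⟨c * d ^ n, x, by positivity, by rw [veron_smul, mulVec_smul, smul_smul]⟩
    · refine .inr ⟨c * d ^ n, by positivity, ?_⟩
      rw [veron_smul, mulVec_smul, smul_smul, veron_infinity]
  · rintro (⟨c, x, hc, rfl⟩ | ⟨c, hc, rfl⟩)
    · exact ⟨![x, 1], fun h => by simpa using congrFun h 1, c, hc, rfl⟩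
    · exact ⟨![1, 0], fun h => by simpa using congrFun h 0, c, hc, by rw [veron_infinity]⟩

lemma smul_mem_cone {z : Fin (n + 1) → ℂ} {c : ℂ} (hc : c ≠ 0) (hz : z ∈ cone M) :
    c • z ∈ cone M := by
  obtain ⟨v, hv, d, hd, rfl⟩ := hz
  exact ⟨v, hv, c * d, mul_ne_zero hc hd, smul_smul ..⟩

lemma smul_mem_cone_iff {z : Fin (n + 1) → ℂ} {c : ℂ} (hc : c ≠ 0) :
    c • z ∈ cone M ↔ z ∈ cone M :=
  ⟨fun h => by simpa [smul_smul, hc] using smul_mem_cone (inv_ne_zero hc) h, smul_mem_cone hc⟩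

lemma mk_mem_curve {z : Fin (n + 1) → ℂ} (hz : z ≠ 0) :
    Projectivization.mk ℂ z hz ∈ curve M ↔ z ∈ cone M := by
  obtain ⟨a, ha⟩ := Projectivization.exists_smul_eq_mk_rep ℂ z hz
  change Projectivization.rep _ ∈ cone M ↔ _
  rw [← ha]
  exact smul_mem_cone_iff a.ne_zero

lemma mem_projSet {k : ℕ} {A : Matrix (Fin (n + 1)) (Fin k) ℂ} {P : PP n} :
    P ∈ projSet A ↔ P.rep ∈ LinearMap.range A.mulVecLin := by
  rw [range_mulVecLin]; rfl

lemma mk_mem_projSet {k : ℕ} {A : Matrix (Fin (n + 1)) (Fin k) ℂ} {z : Fin (n + 1) → ℂ}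
    (hz : z ≠ 0) :
    Projectivization.mk ℂ z hz ∈ projSet A ↔ z ∈ LinearMap.range A.mulVecLin := by
  obtain ⟨a, ha⟩ := Projectivization.exists_smul_eq_mk_rep ℂ z hz
  rw [mem_projSet, ← ha]
  exact Submodule.smul_mem_iff _ a.ne_zero

lemma col_ne_zero_of_rank_eq_one {P : Matrix (Fin (n + 1)) (Fin 1) ℂ} (hP : P.rank = 1) :
    P.col 0 ≠ 0 := by
  intro h
  have : P = 0 := by ext i j; rw [Subsingleton.elim j 0]; exact congrFun h i
  simp [this] at hP

lemma projSet_subset_curve_iff {P : Matrix (Fin (n + 1)) (Fin 1) ℂ} (hP : P.rank = 1) :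
    projSet P ⊆ curve M ↔ P.col 0 ∈ cone M := by
  have hP0 := col_ne_zero_of_rank_eq_one hP
  have hrange : LinearMap.range P.mulVecLin = ℂ ∙ P.col 0 := by
    rw [range_mulVecLin, Set.range_unique]; rfl
  constructor
  · intro h
    rw [← mk_mem_curve hP0]
    exact h ((mk_mem_projSet hP0).mpr (hrange ▸ Submodule.mem_span_singleton_self _))
  · intro h Q hQ
    rw [mem_projSet, hrange, Submodule.mem_span_singleton] at hQ
    obtain ⟨c, hc⟩ := hQ
    change Q.rep ∈ cone M
    rw [← hc]
    refine smul_mem_cone (fun h0 => Q.rep_nonzero ?_) h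
    rw [← hc, h0, zero_smul]

end Cone

section Secants

variable {n : ℕ}

/-- `[v, w] = v₀w₁ - v₁w₀`, which vanishes exactly when `v` and `w` are proportional. -/
def bracket (v w : Fin 2 → ℂ) : ℂ := v 0 * w 1 - v 1 * w 0

lemma exists_smul_eq_of_bracket_eq_zero {v w : Fin 2 → ℂ} (hw : w ≠ 0)
    (h : bracket v w = 0) : ∃ c : ℂ, v = c • w := by
  have hdet : v 0 * w 1 = v 1 * w 0 := sub_eq_zero.mp h
  obtain ⟨i, hi⟩ := Function.ne_iff.mp hw
  refine ⟨v i / w i, ?_⟩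
  fin_cases i <;> ext j <;> fin_cases j <;> simp at hi ⊢ <;> field_simp <;> grind

lemma exists_forall_bracket_ne_zero {ι : Type*} [Finite ι] {v : ι → Fin 2 → ℂ}
    (hv : ∀ i, v i ≠ 0) : ∃ w : Fin 2 → ℂ, ∀ i, bracket w (v i) ≠ 0 := by
  obtain ⟨x, hx⟩ := (Set.finite_range fun i => v i 0 / v i 1).exists_notMem
  refine ⟨![x, 1], fun i h => hx ⟨i, ?_⟩⟩
  have h' : x * v i 1 = v i 0 := by simpa [bracket, sub_eq_zero] using h
  have h1 : v i 1 ≠ 0 := fun h1 => hv i (by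
    ext j; fin_cases j
    · simpa [h1] using h'.symm
    · exact h1)
  exact (eq_div_of_mul_eq h1 h').symm

lemma det_veron (v : Fin (n + 1) → Fin 2 → ℂ) :
    (Matrix.of fun i => veron n (v i)).det =
      ∏ i, ∏ j ∈ Finset.Ioi i, bracket (v j) (v i) := by
  have : (Matrix.of fun i => veron n (v i)) =
      projVandermonde (fun i => v i 0) (fun i => v i 1) := by
    ext i k
    simp [veron, projVandermonde_apply, Fin.rev, Nat.add_sub_add_right]
  rw [this, det_projVandermonde]
  exact Finset.prod_congr rfl fun i _ => Finset.prod_congr rfl fun j _ => by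
    rw [bracket, mul_comm (v i 0)]

lemma linearIndependent_veron {k : ℕ} {v : Fin k → Fin 2 → ℂ} (hv : ∀ i, v i ≠ 0)
    (hpair : Pairwise fun i j => bracket (v i) (v j) ≠ 0) (hk : k ≤ n + 1) :
    LinearIndependent ℂ fun i => veron n (v i) := by
  obtain _ | k := k
  · exact linearIndependent_empty_type
  induction n, Nat.le_of_succ_le_succ hk using Nat.le_induction with
  | base =>
    refine linearIndependent_rows_of_det_ne_zero (A := Matrix.of fun i => veron k (v i)) ?_
    rw [det_veron]
    exact Finset.prod_ne_zero_iff.mpr fun i _ => Finset.prod_ne_zero_iff.mpr fun j hj =>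
      hpair (Finset.mem_Ioi.mp hj).ne'
  | succ n hn ih =>
    obtain ⟨w, hw⟩ := exists_forall_bracket_ne_zero hv
    -- The dual of multiplication by the linear form `[w, ·]`.
    let L : (Fin (n + 2) → ℂ) →ₗ[ℂ] Fin (n + 1) → ℂ :=
      LinearMap.pi fun k => w 0 • LinearMap.proj k.castSucc - w 1 • LinearMap.proj k.succ
    have hL (u : Fin 2 → ℂ) : L (veron (n + 1) u) = bracket w u • veron n u := by
      ext k
      have hk : n + 1 - (k : ℕ) = n - k + 1 := by omega
      simp [L, veron, bracket, hk]
      ring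
    refine .of_comp L ?_
    simp only [Function.comp_def, hL]
    exact (ih (by omega)).units_smul fun i => Units.mk0 _ (hw i)

lemma exists_span_veron_eq_range {m : ℕ} (hm : 1 ≤ m) (hmn : m ≤ n + 1)
    {M : Matrix (Fin (n + 1)) (Fin (n + 1)) ℂ} (hM : IsUnit M.det)
    {B : Matrix (Fin (n + 1)) (Fin m) ℂ} (hB : B.rank = m)
    (hcard : (curve M ∩ projSet B).ncard = m) :
    ∃ v : Fin m → Fin 2 → ℂ, (∀ i, v i ≠ 0) ∧
      (Pairwise fun i j => bracket (v i) (v j) ≠ 0) ∧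
      Submodule.span ℂ (Set.range fun i => M *ᵥ veron n (v i)) =
        LinearMap.range B.mulVecLin := by
  have : Finite ↥(curve M ∩ projSet B) := Set.finite_of_ncard_pos (by omega)
  let e := Finite.equivFinOfCardEq (n := m) hcard
  have hmem (i : Fin m) := (e.symm i).2
  choose v hv c hc hrep using fun i => (hmem i).1
  have hpair : Pairwise fun i j => bracket (v i) (v j) ≠ 0 := by
    intro i j hij h
    obtain ⟨d, hvd⟩ := exists_smul_eq_of_bracket_eq_zero (hv j) h
    refine hij (e.symm.injective (Subtype.ext ?_))
    rw [← Projectivization.mk_rep (e.symm i).1, ← Projectivization.mk_rep (e.symm j).1,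
      Projectivization.mk_eq_mk_iff']
    refine ⟨c i * d ^ n / c j, ?_⟩
    rw [hrep, hrep, hvd, veron_smul, mulVec_smul, smul_smul, smul_smul, div_mul_cancel₀ _ (hc j)]
  have hind : LinearIndependent ℂ fun i => M *ᵥ veron n (v i) :=
    (linearIndependent_veron hv hpair hmn).map' M.mulVecLin
      (ker_mulVecLin_eq_bot_iff.mpr fun z hz =>
        (mulVec_injective_iff_isUnit.mpr ((isUnit_iff_isUnit_det _).mpr hM))
          (hz.trans (mulVec_zero _).symm))
  refine ⟨v, hv, hpair, Submodule.eq_of_le_of_finrank_eq ?_ ?_⟩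
  · rw [Submodule.span_le]
    rintro _ ⟨i, rfl⟩
    have := mem_projSet.mp (hmem i).2
    rw [hrep] at this
    exact (Submodule.smul_mem_iff _ (hc i)).mp this
  · rw [finrank_span_eq_card hind, Fintype.card_fin]
    exact hB.symm

end Secants

section PointAtInfinity

variable {n : ℕ}

/-- The matrix of the substitution `(s, t) ↦ (s + x t, t)` on the vector of monomials. -/
def translation (n : ℕ) (x : ℂ) : Matrix (Fin (n + 1)) (Fin (n + 1)) ℂ :=
  .of fun k i => (k : ℕ).choose i * x ^ ((k : ℕ) - i)

lemma translation_mulVec_veron (x : ℂ) (v : Fin 2 → ℂ) :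
    translation n x *ᵥ veron n v = veron n ![v 0 + x * v 1, v 1] := by
  ext k
  have hk : (k : ℕ) ≤ n := Nat.lt_succ_iff.mp k.2
  simp only [mulVec, dotProduct, translation, of_apply, veron, cons_val_zero, cons_val_one]
  rw [Fin.sum_univ_eq_sum_range
    (fun i => ((k : ℕ).choose i * x ^ ((k : ℕ) - i) * (v 0 ^ i * v 1 ^ (n - i)) : ℂ)),
    add_pow, Finset.sum_mul]
  refine (Finset.sum_subset (Finset.range_mono (Nat.succ_le_succ hk)) fun i _ hi => ?_).symm.trans
    (Finset.sum_congr rfl fun i hi => ?_)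
  · rw [Nat.choose_eq_zero_of_lt (by simpa [Nat.lt_succ_iff] using hi)]
    simp
  · have hik : i ≤ k := Nat.lt_succ_iff.mp (Finset.mem_range.mp hi)
    rw [mul_pow, show n - i = (k - i) + (n - k) by omega, pow_add]
    ring

lemma det_translation (x : ℂ) : (translation n x).det = 1 := by
  rw [det_of_isLowerTriangular _ fun i j hij => by
    have : (i : ℕ) < j := hij
    simp [translation, Nat.choose_eq_zero_of_lt this]]
  simp [translation]

lemma submatrix_rev_mulVec_veron (M : Matrix (Fin (n + 1)) (Fin (n + 1)) ℂ) (v : Fin 2 → ℂ) :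
    M.submatrix id Fin.revPerm *ᵥ veron n v = M *ᵥ veron n ![v 1, v 0] := by
  have : veron n v ∘ Fin.revPerm.symm = veron n ![v 1, v 0] := by
    ext k
    have hk : n - (n - (k : ℕ)) = k := Nat.sub_sub_self (Nat.lt_succ_iff.mp k.2)
    simp [veron, Fin.val_rev, Nat.add_sub_add_right, hk, mul_comm]
  rw [submatrix_mulVec_equiv, this]
  rfl

lemma exists_cone_eq_infinity {M : Matrix (Fin (n + 1)) (Fin (n + 1)) ℂ} (hM : IsUnit M.det)
    {u : Fin (n + 1) → ℂ} (hu : u ∈ cone M) :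
    ∃ N : Matrix (Fin (n + 1)) (Fin (n + 1)) ℂ, IsUnit N.det ∧ cone N = cone M ∧
      ∃ c : ℂ, c ≠ 0 ∧ u = c • N *ᵥ Pi.single (Fin.last n) 1 := by
  rcases mem_cone_iff.mp hu with ⟨c, x, hc, rfl⟩ | ⟨c, hc, rfl⟩
  swap
  · exact ⟨M, hM, rfl, c, hc, rfl⟩
  let N := (M * translation n x).submatrix id Fin.revPerm
  have hN (v : Fin 2 → ℂ) : N *ᵥ veron n v = M *ᵥ veron n ![v 1 + x * v 0, v 0] := by
    rw [submatrix_rev_mulVec_veron, ← mulVec_mulVec, translation_mulVec_veron]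
    rfl
  refine ⟨N, ?_, Set.Subset.antisymm ?_ ?_, c, hc, by simp [← veron_infinity, hN]⟩
  · rw [det_permute', det_mul, det_translation, mul_one]
    exact ((Equiv.Perm.sign Fin.revPerm).isUnit.map (Int.castRingHom ℂ)).mul hM
  · rintro _ ⟨v, hv, d, hd, rfl⟩
    refine ⟨![v 1 + x * v 0, v 0], fun h => hv ?_, d, hd, by rw [hN]⟩
    have h0 : v 0 = 0 := congrFun h 1
    have h1 : v 1 = 0 := by simpa [h0] using congrFun h 0
    ext i; fin_cases i <;> assumption
  · rintro _ ⟨v, hv, d, hd, rfl⟩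
    refine ⟨![v 1, v 0 - x * v 1], fun h => hv ?_, d, hd, ?_⟩
    · have h1 : v 1 = 0 := congrFun h 0
      have h0 : v 0 = 0 := by simpa [h1] using congrFun h 1
      ext i; fin_cases i <;> assumption
    · rw [hN]
      congr 3
      ext i; fin_cases i <;> simp

end PointAtInfinity

section ModInfinity

variable {n : ℕ}

/-- The endomorphism `θ` maps `W` into `W + ⟨u⟩`. -/
def InvariantMod (θ : Matrix (Fin (n + 1)) (Fin (n + 1)) ℂ) (u : Fin (n + 1) → ℂ)
    (W : Submodule ℂ (Fin (n + 1) → ℂ)) : Prop :=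
  W.map θ.mulVecLin ≤ W ⊔ ℂ ∙ u

variable {θ : Matrix (Fin (n + 1)) (Fin (n + 1)) ℂ} {u : Fin (n + 1) → ℂ}

lemma invariantMod_iff {W : Submodule ℂ (Fin (n + 1) → ℂ)} :
    InvariantMod θ u W ↔ ∀ w ∈ W, θ *ᵥ w ∈ W ⊔ ℂ ∙ u :=
  Submodule.map_le_iff_le_comap

lemma invariantMod_span_singleton_iff {z : Fin (n + 1) → ℂ} :
    InvariantMod θ u (ℂ ∙ z) ↔ ∃ a b : ℂ, θ *ᵥ z = a • z + b • u := by
  rw [InvariantMod, Submodule.map_span, Set.image_singleton,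
    Submodule.span_singleton_le_iff_mem, Submodule.mem_sup]
  simp only [Submodule.mem_span_singleton, mulVecLin_apply]
  constructor
  · rintro ⟨_, ⟨a, rfl⟩, _, ⟨b, rfl⟩, h⟩
    exact ⟨a, b, h.symm⟩
  · rintro ⟨a, b, h⟩
    exact ⟨_, ⟨a, rfl⟩, _, ⟨b, rfl⟩, h.symm⟩

lemma invariantMod_span {ι : Type*} {z : ι → Fin (n + 1) → ℂ}
    (h : ∀ i, InvariantMod θ u (ℂ ∙ z i)) :
    InvariantMod θ u (Submodule.span ℂ (Set.range z)) := by
  rw [InvariantMod, Submodule.map_span_le]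
  rintro _ ⟨i, rfl⟩
  have := invariantMod_iff.mp (h i) (z i) (Submodule.mem_span_singleton_self _)
  have hle : ℂ ∙ z i ≤ Submodule.span ℂ (Set.range z) :=
    Submodule.span_mono (Set.singleton_subset_iff.mpr ⟨i, rfl⟩)
  exact sup_le_sup_right hle (ℂ ∙ u) this

/-- The endomorphism `κθ + e + uf`, which for `κ ≠ 0` has the same invariant subspaces modulo `u`
as `θ`. -/
def renormalize (θ : Matrix (Fin (n + 1)) (Fin (n + 1)) ℂ) (u : Fin (n + 1) → ℂ)
    (κ e : ℂ) (f : Fin (n + 1) → ℂ) : Matrix (Fin (n + 1)) (Fin (n + 1)) ℂ :=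
  κ • θ + e • 1 + vecMulVec u f

lemma renormalize_mulVec (κ e : ℂ) (f w : Fin (n + 1) → ℂ) :
    renormalize θ u κ e f *ᵥ w = κ • θ *ᵥ w + e • w + (f ⬝ᵥ w) • u := by
  simp [renormalize, add_mulVec, smul_mulVec, vecMulVec_mulVec]

lemma InvariantMod.renormalize {W : Submodule ℂ (Fin (n + 1) → ℂ)} (h : InvariantMod θ u W)
    (κ e : ℂ) (f : Fin (n + 1) → ℂ) : InvariantMod (renormalize θ u κ e f) u W := by
  refine invariantMod_iff.mpr fun w hw => ?_
  rw [renormalize_mulVec]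
  exact add_mem (add_mem (Submodule.smul_mem _ _ (invariantMod_iff.mp h w hw))
    (Submodule.mem_sup_left (Submodule.smul_mem _ _ hw)))
    (Submodule.mem_sup_right (Submodule.smul_mem _ _ (Submodule.mem_span_singleton_self u)))

/-- The nonzero vectors that are multiples of `u` or eigenvectors of `θ` modulo `u`; for general
`θ` they form the cone over a rational normal curve through `u`. -/
def eigencone (θ : Matrix (Fin (n + 1)) (Fin (n + 1)) ℂ) (u : Fin (n + 1) → ℂ) :
    Set (Fin (n + 1) → ℂ) :=
  {z | z ≠ 0 ∧ (z ∈ ℂ ∙ u ∨ InvariantMod θ u (ℂ ∙ z))}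

lemma eigencone_renormalize {κ : ℂ} (hκ : κ ≠ 0) (e : ℂ) (f : Fin (n + 1) → ℂ) :
    eigencone (renormalize θ u κ e f) u = eigencone θ u := by
  have hθ : θ = renormalize (renormalize θ u κ e f) u κ⁻¹ (-(κ⁻¹ * e)) (-(κ⁻¹ • f)) := by
    simp only [renormalize, smul_add, smul_smul, inv_mul_cancel₀ hκ, one_smul, neg_smul,
      vecMulVec_neg, vecMulVec_smul]
    abel
  ext z
  refine and_congr_right fun _ => or_congr_right ⟨fun h => ?_, fun h => h.renormalize _ _ _⟩
  rw [hθ]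
  exact h.renormalize _ _ _

/-- The nilpotent shift `(y₀, …, yₙ) ↦ (y₁, …, yₙ, 0)`. -/
def shift (n : ℕ) : Matrix (Fin (n + 1)) (Fin (n + 1)) ℂ :=
  .of fun i j => if (j : ℕ) = i + 1 then 1 else 0

lemma shift_mulVec_of_lt (y : Fin (n + 1) → ℂ) {k : ℕ} (hk : k + 1 < n + 1) :
    (shift n *ᵥ y) ⟨k, by omega⟩ = y ⟨k + 1, hk⟩ := by
  have (j : Fin (n + 1)) : (j : ℕ) = k + 1 ↔ j = ⟨k + 1, hk⟩ := by simp [Fin.ext_iff]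
  simp [shift, mulVec, dotProduct, this]

lemma shift_mulVec_last (y : Fin (n + 1) → ℂ) : (shift n *ᵥ y) (Fin.last n) = 0 := by
  have (j : Fin (n + 1)) : (j : ℕ) ≠ n + 1 := j.2.ne
  simp [shift, mulVec, dotProduct, this]

lemma shift_mulVec_veron (x : ℂ) :
    shift n *ᵥ veron n ![x, 1] =
      x • veron n ![x, 1] - x ^ (n + 1) • Pi.single (Fin.last n) 1 := by
  ext i
  obtain rfl | hi := eq_or_ne i (Fin.last n)
  · simp [shift_mulVec_last, veron_affine, pow_succ']
  · have := Fin.val_lt_last hi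
    rw [shift_mulVec_of_lt _ (by omega : (i : ℕ) + 1 < n + 1)]
    simp [veron_affine, pow_succ', hi]

lemma eq_smul_veron_of_shift_eq {y : Fin (n + 1) → ℂ} {a b : ℂ}
    (h : shift n *ᵥ y = a • y + b • Pi.single (Fin.last n) 1) : y = y 0 • veron n ![a, 1] := by
  have (k : ℕ) (hk : k < n + 1) : y ⟨k, hk⟩ = y 0 * a ^ k := by
    induction k with
    | zero => simp
    | succ k ih =>
      have hk' : (⟨k, by omega⟩ : Fin (n + 1)) ≠ Fin.last n := by simp [Fin.ext_iff]; omega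
      rw [← shift_mulVec_of_lt y hk, h]
      simp [hk', ih (by omega), pow_succ']
      ring
  ext i
  simpa [veron_affine] using this i i.2

/-- In the basis given by the columns of `M`, the last of which is proportional to `u`, the
endomorphism `θ` is the nilpotent shift modulo `u`. -/
structure IsShiftBasis (θ : Matrix (Fin (n + 1)) (Fin (n + 1)) ℂ) (u : Fin (n + 1) → ℂ)
    (M : Matrix (Fin (n + 1)) (Fin (n + 1)) ℂ) : Prop where
  isUnit_det : IsUnit M.det
  exists_smul_last : ∃ c : ℂ, c ≠ 0 ∧ u = c • M *ᵥ Pi.single (Fin.last n) 1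
  exists_mulVec_eq : ∀ y, ∃ b : ℂ, θ *ᵥ M *ᵥ y = M *ᵥ shift n *ᵥ y + b • u

namespace IsShiftBasis

variable {M : Matrix (Fin (n + 1)) (Fin (n + 1)) ℂ}

lemma mulVec_veron (h : IsShiftBasis θ u M) (x : ℂ) :
    ∃ b : ℂ, θ *ᵥ M *ᵥ veron n ![x, 1] = x • M *ᵥ veron n ![x, 1] + b • u := by
  obtain ⟨c, hc, hu⟩ := h.exists_smul_last
  obtain ⟨b, hb⟩ := h.exists_mulVec_eq (veron n ![x, 1])
  refine ⟨b - x ^ (n + 1) * c⁻¹, ?_⟩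
  have hlast : M *ᵥ Pi.single (Fin.last n) 1 = c⁻¹ • u := by
    rw [hu, smul_smul, inv_mul_cancel₀ hc, one_smul]
  rw [hb, shift_mulVec_veron, mulVec_sub, mulVec_smul, mulVec_smul, hlast]
  module

lemma exists_eq_smul_veron (h : IsShiftBasis θ u M) {z : Fin (n + 1) → ℂ} {a b : ℂ}
    (hz : θ *ᵥ z = a • z + b • u) : ∃ d : ℂ, z = d • M *ᵥ veron n ![a, 1] := by
  obtain ⟨c, -, hu⟩ := h.exists_smul_last
  have hM : IsUnit M := (isUnit_iff_isUnit_det _).mpr h.isUnit_det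
  obtain ⟨y, rfl⟩ := mulVec_surjective_iff_isUnit.mpr hM z
  obtain ⟨b', hb'⟩ := h.exists_mulVec_eq y
  have hy : shift n *ᵥ y = a • y + ((b - b') * c) • Pi.single (Fin.last n) 1 := by
    apply mulVec_injective_iff_isUnit.mpr hM
    change M *ᵥ _ = M *ᵥ _
    rw [mulVec_add, mulVec_smul, mulVec_smul, mul_smul, ← hu, sub_smul, ← add_sub_assoc, ← hz,
      hb', add_sub_cancel_right]
  refine ⟨y 0, ?_⟩
  conv_lhs => rw [eq_smul_veron_of_shift_eq hy, mulVec_smul]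

lemma cone_eq_eigencone (h : IsShiftBasis θ u M) : cone M = eigencone θ u := by
  have hMinj : Function.Injective M.mulVec :=
    mulVec_injective_iff_isUnit.mpr ((isUnit_iff_isUnit_det _).mpr h.isUnit_det)
  have hne {y : Fin (n + 1) → ℂ} (hy : y ≠ 0) : M *ᵥ y ≠ 0 :=
    fun h0 => hy (hMinj (h0.trans (mulVec_zero M).symm))
  obtain ⟨c, hc, hu⟩ := h.exists_smul_last
  ext z
  rw [mem_cone_iff]
  constructor
  · rintro (⟨d, x, hd, rfl⟩ | ⟨d, hd, rfl⟩)
    · refine ⟨smul_ne_zero hd (hne fun h0 => ?_), .inr ?_⟩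
      · simpa [veron_affine] using congrFun h0 0
      · obtain ⟨b, hb⟩ := h.mulVec_veron x
        refine invariantMod_span_singleton_iff.mpr ⟨x, d * b, ?_⟩
        rw [mulVec_smul, hb]
        module
    · refine ⟨smul_ne_zero hd (hne (Pi.single_ne_zero_iff.mpr one_ne_zero)), .inl ?_⟩
      refine Submodule.mem_span_singleton.mpr ⟨d / c, ?_⟩
      rw [hu, smul_smul, div_mul_cancel₀ d hc]
  · rintro ⟨hz, hzu | hz'⟩
    · obtain ⟨d, rfl⟩ := Submodule.mem_span_singleton.mp hzu
      have hd : d ≠ 0 := fun h0 => hz (by rw [h0, zero_smul])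
      exact .inr ⟨d * c, mul_ne_zero hd hc, by rw [hu, smul_smul]⟩
    · obtain ⟨a, b, hab⟩ := invariantMod_span_singleton_iff.mp hz'
      obtain ⟨d, hd⟩ := h.exists_eq_smul_veron hab
      exact .inl ⟨d, a, fun h0 => hz (by rw [hd, h0, zero_smul]), hd⟩

end IsShiftBasis

lemma exists_cone_eq_eigencone {M : Matrix (Fin (n + 1)) (Fin (n + 1)) ℂ} (hM : IsUnit M.det)
    (hu : u ∈ cone M) :
    ∃ θ : Matrix (Fin (n + 1)) (Fin (n + 1)) ℂ, cone M = eigencone θ u := by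
  obtain ⟨N, hN, hcone, hc⟩ := exists_cone_eq_infinity hM hu
  refine ⟨N * shift n * N⁻¹, hcone ▸ IsShiftBasis.cone_eq_eigencone ⟨hN, hc, fun y => ⟨0, ?_⟩⟩⟩
  rw [mulVec_mulVec, nonsing_inv_mul_cancel_right _ _ hN, mulVec_mulVec, zero_smul, add_zero]

lemma cone_ne_compl_zero (hn : 2 ≤ n) {M : Matrix (Fin (n + 1)) (Fin (n + 1)) ℂ}
    (hM : IsUnit M.det) : cone M ≠ {0}ᶜ := by
  have hMinj : Function.Injective M.mulVec :=
    mulVec_injective_iff_isUnit.mpr ((isUnit_iff_isUnit_det _).mpr hM)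
  obtain ⟨k, rfl⟩ := Nat.exists_eq_add_of_le' hn
  intro h
  have hmem : M *ᵥ Pi.single 1 1 ∈ cone M := by
    rw [h]
    exact fun h0 => Pi.single_ne_zero_iff.mpr one_ne_zero (hMinj (h0.trans (mulVec_zero M).symm))
  rcases mem_cone_iff.mp hmem with ⟨c, x, hc, hcx⟩ | ⟨c, -, hc⟩
  · have := hMinj (hcx.trans (mulVec_smul ..).symm)
    exact hc (by simpa [veron_affine] using (congrFun this 0).symm)
  · have := hMinj (hc.trans (mulVec_smul ..).symm)
    simpa [Pi.single_apply, Fin.ext_iff] using congrFun this 1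

end ModInfinity

section Horner

variable {n : ℕ} (θ : Matrix (Fin (n + 1)) (Fin (n + 1)) ℂ) (u : Fin (n + 1) → ℂ)

/-- The vector `q(θ) u`, where `q` is the quotient of the characteristic polynomial of `θ` by
`X ^ (j + 1)`. -/
def hornerVec (j : ℕ) : Fin (n + 1) → ℂ :=
  ∑ i ∈ Finset.range (n + 1), θ.charpoly.coeff (i + j + 1) • θ ^ i *ᵥ u

/-- The vectors `hornerVec θ u j` as columns: the basis on which `θ` acts as a shift modulo
`u`, if it is one. -/
def hornerMatrix : Matrix (Fin (n + 1)) (Fin (n + 1)) ℂ :=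
  .of fun r j => hornerVec θ u j r

lemma coeff_charpoly_of_lt {k : ℕ} (hk : n + 1 < k) : θ.charpoly.coeff k = 0 :=
  coeff_eq_zero_of_natDegree_lt (by simpa [charpoly_natDegree_eq_dim] using hk)

lemma coeff_charpoly_dim : θ.charpoly.coeff (n + 1) = 1 := by
  simpa [charpoly_natDegree_eq_dim] using θ.charpoly_monic.coeff_natDegree

lemma mulVec_hornerVec_add (j : ℕ) :
    θ *ᵥ hornerVec θ u j + θ.charpoly.coeff j • u =
      ∑ i ∈ Finset.range (n + 2), θ.charpoly.coeff (i + j) • θ ^ i *ᵥ u := by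
  rw [Finset.sum_range_succ', hornerVec, mulVec_sum]
  simp [mulVec_smul, pow_succ', add_right_comm]

lemma mulVec_hornerVec_zero : θ *ᵥ hornerVec θ u 0 = -(θ.charpoly.coeff 0 • u) := by
  rw [eq_neg_iff_add_eq_zero, mulVec_hornerVec_add]
  have h := congrArg (· *ᵥ u) (aeval_self_charpoly θ)
  simp only [zero_mulVec] at h
  rw [← h, aeval_eq_sum_range, charpoly_natDegree_eq_dim, Fintype.card_fin, sum_mulVec]
  simp [smul_mulVec]

lemma mulVec_hornerVec_succ (j : ℕ) :
    θ *ᵥ hornerVec θ u (j + 1) = hornerVec θ u j - θ.charpoly.coeff (j + 1) • u := by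
  rw [eq_sub_iff_add_eq, mulVec_hornerVec_add, Finset.sum_range_succ,
    coeff_charpoly_of_lt θ (by omega), zero_smul, add_zero]
  rfl

lemma hornerVec_dim : hornerVec θ u n = u := by
  rw [hornerVec, Finset.sum_range_succ', zero_add, coeff_charpoly_dim]
  rw [Finset.sum_eq_zero fun i _ => by rw [coeff_charpoly_of_lt θ (by omega), zero_smul]]
  simp

lemma hornerMatrix_mulVec (y : Fin (n + 1) → ℂ) :
    hornerMatrix θ u *ᵥ y = ∑ j, y j • hornerVec θ u j := by
  ext r
  simp [hornerMatrix, mulVec, dotProduct, mul_comm]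

lemma hornerMatrix_mulVec_single (j : Fin (n + 1)) :
    hornerMatrix θ u *ᵥ Pi.single j 1 = hornerVec θ u j := by
  rw [mulVec_single_one]; rfl

lemma isShiftBasis_hornerMatrix (h : IsUnit (hornerMatrix θ u).det) :
    IsShiftBasis θ u (hornerMatrix θ u) where
  isUnit_det := h
  exists_smul_last := ⟨1, one_ne_zero, by
    rw [hornerMatrix_mulVec_single, Fin.val_last, hornerVec_dim, one_smul]⟩
  exists_mulVec_eq y := by
    refine ⟨-∑ j : Fin (n + 1), y j * θ.charpoly.coeff j, ?_⟩
    have hshift : hornerMatrix θ u *ᵥ shift n *ᵥ y =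
        ∑ i : Fin n, y i.succ • hornerVec θ u i := by
      rw [hornerMatrix_mulVec, Fin.sum_univ_castSucc, shift_mulVec_last, zero_smul, add_zero]
      exact Finset.sum_congr rfl fun i _ =>
        congrArg (· • _) (shift_mulVec_of_lt y (Nat.succ_lt_succ i.2))
    rw [hshift, hornerMatrix_mulVec, mulVec_sum, Fin.sum_univ_succ, Fin.sum_univ_succ]
    simp only [mulVec_smul, Fin.val_zero, mulVec_hornerVec_zero, Fin.val_succ,
      mulVec_hornerVec_succ, smul_sub, Finset.sum_sub_distrib, neg_smul, add_smul, mul_smul,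
      Finset.sum_smul, smul_neg]
    abel

lemma charpoly_shift : (shift n).charpoly = X ^ (n + 1) := by
  rw [charpoly_of_isUpperTriangular _ fun i j hij => by
    have : (j : ℕ) < i := hij
    simp only [shift, of_apply, ite_eq_right_iff]
    omega]
  simp [shift]

lemma shift_pow_mulVec_last {k : ℕ} (hk : k ≤ n) :
    shift n ^ k *ᵥ Pi.single (Fin.last n) 1 = Pi.single ⟨n - k, by omega⟩ 1 := by
  induction k with
  | zero => rw [pow_zero, one_mulVec]; rfl
  | succ k ih =>
    rw [pow_succ', ← mulVec_mulVec, ih (by omega), mulVec_single_one]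
    ext i
    simp only [col_apply, shift, of_apply, Pi.single_apply, Fin.ext_iff]
    congr 1
    rw [eq_iff_iff]
    omega

lemma shift_mulVec_single_last :
    shift (n + 1) *ᵥ Pi.single (Fin.last (n + 1)) 1 = Pi.single (Fin.last n).castSucc 1 := by
  rw [← pow_one (shift (n + 1)), shift_pow_mulVec_last (by omega)]
  rfl

lemma hornerMatrix_shift : hornerMatrix (shift n) (Pi.single (Fin.last n) 1) = 1 := by
  refine ext_of_mulVec_single fun j => ?_
  rw [hornerMatrix_mulVec_single, one_mulVec, hornerVec, charpoly_shift,
    Finset.sum_eq_single_of_mem (n - (j : ℕ)) (Finset.mem_range.mpr (by omega)),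
    shift_pow_mulVec_last (n.sub_le j)]
  · have : n - (j : ℕ) + j = n := Nat.sub_add_cancel (Nat.lt_succ_iff.mp j.2)
    have hj : n - (n - (j : ℕ)) = j := Nat.sub_sub_self (Nat.lt_succ_iff.mp j.2)
    simp [this, hj]
  · intro i _ hi
    rw [coeff_X_pow, if_neg (by omega), zero_smul]

end Horner

section CodimTwo

variable {m : ℕ}

/-- The bilinear form `(p, q) ↦ det (p, q, b₁, …, bₘ)`, where the `bₖ` are the columns of `B`;
it is the Plücker form of the subspace spanned by `B`. -/
def pluckerForm (B : Matrix (Fin (m + 2)) (Fin m) ℂ) (p : Fin (m + 2) → ℂ) :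
    (Fin (m + 2) → ℂ) →ₗ[ℂ] ℂ :=
  detRowAlternating.toMultilinearMap.toLinearMap (vecCons p (vecCons 0 B.col)) 1

lemma pluckerForm_apply (B : Matrix (Fin (m + 2)) (Fin m) ℂ) (p q : Fin (m + 2) → ℂ) :
    pluckerForm B p q = (of (vecCons p (vecCons q B.col))).det := by
  change det (Function.update (Fin.cons p (Fin.cons 0 B.col)) (Fin.succ 0) q) = _
  rw [← Fin.cons_update, Fin.update_cons_zero]
  rfl

variable {B : Matrix (Fin (m + 2)) (Fin m) ℂ} {u : Fin (m + 2) → ℂ}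

lemma pluckerForm_self : pluckerForm B u u = 0 := by
  rw [pluckerForm_apply]
  exact det_zero_of_row_eq Fin.zero_ne_one rfl

lemma pluckerForm_swap (p q : Fin (m + 2) → ℂ) : pluckerForm B q p = -pluckerForm B p q := by
  have : vecCons q (vecCons p B.col) = vecCons p (vecCons q B.col) ∘ Equiv.swap 0 1 := by
    ext i : 1
    refine Fin.cases rfl (Fin.cases rfl fun k => ?_) i
    rw [Function.comp_apply,
      Equiv.swap_apply_of_ne_of_ne (Fin.succ_ne_zero _) (Fin.succ_succ_ne_one k)]
    rfl
  rw [pluckerForm_apply, pluckerForm_apply, this]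
  exact (detRowAlternating (R := ℂ)).map_swap (vecCons p (vecCons q B.col)) Fin.zero_ne_one

lemma pluckerForm_eq_zero_of_mem_range {w : Fin (m + 2) → ℂ}
    (hw : w ∈ LinearMap.range B.mulVecLin) : pluckerForm B u w = 0 := by
  suffices LinearMap.range B.mulVecLin ≤ LinearMap.ker (pluckerForm B u) from this hw
  rw [range_mulVecLin, Submodule.span_le]
  rintro _ ⟨k, rfl⟩
  rw [SetLike.mem_coe, LinearMap.mem_ker, pluckerForm_apply]
  exact det_zero_of_row_eq (i := 1) (j := k.succ.succ) (Fin.succ_injective _ |>.ne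
    (Fin.succ_ne_zero k).symm) rfl

lemma pluckerForm_eq_zero_of_mem_sup {w : Fin (m + 2) → ℂ}
    (hw : w ∈ LinearMap.range B.mulVecLin ⊔ ℂ ∙ u) : pluckerForm B u w = 0 := by
  obtain ⟨b, hb, _, hu, rfl⟩ := Submodule.mem_sup.mp hw
  obtain ⟨c, rfl⟩ := Submodule.mem_span_singleton.mp hu
  rw [map_add, map_smul, pluckerForm_self, pluckerForm_eq_zero_of_mem_range hb, smul_zero,
    add_zero]

lemma linearIndependent_cons_col (h : pluckerForm B u ≠ 0) :
    LinearIndependent ℂ (vecCons u B.col) := by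
  obtain ⟨q, hq⟩ := DFunLike.ne_iff.mp h
  rw [pluckerForm_apply] at hq
  have hrows : LinearIndependent ℂ (vecCons u (vecCons q B.col)) :=
    linearIndependent_rows_of_det_ne_zero hq
  have hskip : Function.Injective (Fin.succAbove (1 : Fin (m + 2))) := Fin.succAbove_right_injective
  convert hrows.comp _ hskip using 1
  ext i : 1
  refine Fin.cases rfl (fun k => rfl) i

lemma notMem_range_of_pluckerForm_ne_zero (h : pluckerForm B u ≠ 0) :
    u ∉ LinearMap.range B.mulVecLin := by
  rw [range_mulVecLin]
  exact (linearIndependent_finCons.mp (linearIndependent_cons_col h)).2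

lemma rank_eq_of_pluckerForm_ne_zero (h : pluckerForm B u ≠ 0) : B.rank = m := by
  rw [rank_eq_finrank_span_cols,
    finrank_span_eq_card (linearIndependent_finCons.mp (linearIndependent_cons_col h)).1,
    Fintype.card_fin]

lemma ker_pluckerForm (h : pluckerForm B u ≠ 0) :
    LinearMap.ker (pluckerForm B u) = LinearMap.range B.mulVecLin ⊔ ℂ ∙ u := by
  refine (Submodule.eq_of_le_of_finrank_eq (fun _ => pluckerForm_eq_zero_of_mem_sup) ?_).symm
  have hspan : LinearMap.range B.mulVecLin ⊔ ℂ ∙ u =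
      Submodule.span ℂ (Set.range (vecCons u B.col)) := by
    rw [range_mulVecLin, range_cons, Submodule.span_union, sup_comm]
  have hker := Module.Dual.finrank_ker_add_one_of_ne_zero h
  rw [Module.finrank_fin_fun] at hker
  rw [hspan, finrank_span_eq_card (linearIndependent_cons_col h), Fintype.card_fin]
  omega

lemma pluckerForm_smul_left (c : ℂ) (p q : Fin (m + 2) → ℂ) :
    pluckerForm B (c • p) q = c * pluckerForm B p q := by
  rw [pluckerForm_swap, map_smul, pluckerForm_swap p, smul_neg, neg_neg, smul_eq_mul]

lemma pluckerForm_mul_left (M : Matrix (Fin (m + 2)) (Fin (m + 2)) ℂ) (p q : Fin (m + 2) → ℂ) :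
    pluckerForm (M * B) (M *ᵥ p) (M *ᵥ q) = M.det * pluckerForm B p q := by
  have : of (vecCons (M *ᵥ p) (vecCons (M *ᵥ q) (M * B).col)) =
      of (vecCons p (vecCons q B.col)) * Mᵀ := by
    ext i : 1
    refine Fin.cases ?_ (Fin.cases ?_ fun k => ?_) i <;>
      rw [mul_apply_eq_vecMul, vecMul_transpose] <;> rfl
  rw [pluckerForm_apply, pluckerForm_apply, this, det_mul, det_transpose, mul_comm]

lemma pluckerForm_mul_right (A : Matrix (Fin m) (Fin m) ℂ) (p q : Fin (m + 2) → ℂ) :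
    pluckerForm (B * A) p q = pluckerForm B p q * A.det := by
  let φ := (((detRowAlternating (R := ℂ)).curryLeft p).curryLeft q).compLinearMap B.mulVecLin
  have hφ (A : Matrix (Fin m) (Fin m) ℂ) : φ A.col = pluckerForm (B * A) p q :=
    (pluckerForm_apply _ _ _).symm
  have hbasis : (Pi.basisFun ℂ (Fin m) : Fin m → Fin m → ℂ) = (1 : Matrix _ _ ℂ).col := by
    ext i j
    simp [Matrix.one_apply, Pi.single_apply]
  have h := congrArg (· A.col) (φ.eq_smul_basis_det (Pi.basisFun ℂ (Fin m)))
  rwa [hφ, AlternatingMap.smul_apply, Pi.basisFun_det_apply, hbasis, hφ, Matrix.mul_one,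
    smul_eq_mul, ← det_transpose] at h

end CodimTwo

section SecantCount

variable {m : ℕ} {θ M : Matrix (Fin (m + 2)) (Fin (m + 2)) ℂ} {B : Matrix (Fin (m + 2)) (Fin m) ℂ}
  {u : Fin (m + 2) → ℂ}

/-- The polynomial `x ↦ det (u, M ν(x), b₁, …, bₘ)`, whose roots are the parameters of the
intersections with `⟨B⟩` of the curve `M` with point at infinity `u`. -/
def secantPoly (B : Matrix (Fin (m + 2)) (Fin m) ℂ) (u : Fin (m + 2) → ℂ)
    (M : Matrix (Fin (m + 2)) (Fin (m + 2)) ℂ) : ℂ[X] :=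
  ∑ k : Fin (m + 1), monomial k (pluckerForm B u (M *ᵥ Pi.single k.castSucc 1))

lemma natDegree_secantPoly_le : (secantPoly B u M).natDegree ≤ m :=
  natDegree_sum_le_of_forall_le _ _ fun k _ =>
    (natDegree_monomial_le _).trans (Nat.lt_succ_iff.mp k.2)

lemma coeff_secantPoly (k : Fin (m + 1)) :
    (secantPoly B u M).coeff k = pluckerForm B u (M *ᵥ Pi.single k.castSucc 1) := by
  simp [secantPoly, coeff_monomial, Fin.val_inj]

lemma eval_secantPoly {c : ℂ} (hc : c ≠ 0) (hu : u = c • M *ᵥ Pi.single (Fin.last (m + 1)) 1)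
    (x : ℂ) :
    (secantPoly B u M).eval x = pluckerForm B u (M *ᵥ veron (m + 1) ![x, 1]) := by
  have hlast : pluckerForm B u (M *ᵥ Pi.single (Fin.last (m + 1)) 1) = 0 := by
    have := pluckerForm_self (B := B) (u := u)
    nth_rw 2 [hu] at this
    simpa [hc] using this
  rw [pi_eq_sum_univ' (veron (m + 1) ![x, 1]), mulVec_sum, map_sum, Fin.sum_univ_castSucc,
    mulVec_smul, map_smul, hlast, smul_zero, add_zero, secantPoly, eval_finsetSum]
  refine Finset.sum_congr rfl fun k _ => ?_
  rw [eval_monomial, mulVec_smul, map_smul, veron_affine, smul_eq_mul, mul_comm]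
  rfl

lemma ncard_isRoot_of_separable {g : ℂ[X]} (hg : g.Separable) :
    {x | g.IsRoot x}.ncard = g.natDegree := by
  classical
  have : {x | g.IsRoot x} = g.roots.toFinset := by
    ext x
    simp [hg.ne_zero]
  rw [this, Set.ncard_coe_finset, Multiset.toFinset_card_of_nodup (nodup_roots hg),
    IsAlgClosed.card_roots_eq_natDegree]

namespace IsShiftBasis

lemma mulVec_veron_mem_range_iff (h : IsShiftBasis θ u M)
    (hB : InvariantMod θ u (LinearMap.range B.mulVecLin)) (hθu : pluckerForm B u (θ *ᵥ u) ≠ 0)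
    (x : ℂ) :
    M *ᵥ veron (m + 1) ![x, 1] ∈ LinearMap.range B.mulVecLin ↔ (secantPoly B u M).IsRoot x := by
  obtain ⟨c, hc, hu⟩ := h.exists_smul_last
  rw [IsRoot.def, eval_secantPoly hc hu]
  refine ⟨pluckerForm_eq_zero_of_mem_range, fun h0 => ?_⟩
  have hmem := h0
  rw [← LinearMap.mem_ker, ker_pluckerForm (fun h0 => hθu (by rw [h0]; rfl))] at hmem
  obtain ⟨w, hw, _, hbu, hwb⟩ := Submodule.mem_sup.mp hmem
  obtain ⟨b, rfl⟩ := Submodule.mem_span_singleton.mp hbu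
  obtain ⟨b', hb'⟩ := h.mulVec_veron x
  have hθ := congrArg (pluckerForm B u) hb'
  rw [map_add, map_smul, map_smul, h0, pluckerForm_self, smul_zero, smul_zero, add_zero, ← hwb,
    mulVec_add, mulVec_smul, map_add, map_smul,
    pluckerForm_eq_zero_of_mem_sup (invariantMod_iff.mp hB w hw), zero_add, smul_eq_mul] at hθ
  rw [← hwb, (mul_eq_zero.mp hθ).resolve_right hθu, zero_smul, add_zero]
  exact hw

lemma coeff_secantPoly_ne_zero (h : IsShiftBasis θ u M) (hθu : pluckerForm B u (θ *ᵥ u) ≠ 0) :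
    (secantPoly B u M).coeff m ≠ 0 := by
  obtain ⟨c, -, hu⟩ := h.exists_smul_last
  obtain ⟨b, hb⟩ := h.exists_mulVec_eq (Pi.single (Fin.last (m + 1)) 1)
  intro h0
  apply hθu
  have h0 := (coeff_secantPoly (Fin.last m)).symm.trans h0
  rw [← shift_mulVec_single_last] at h0
  rw [congrArg (θ *ᵥ ·) hu, mulVec_smul, hb, map_smul, map_add, map_smul, h0, pluckerForm_self]
  simp

lemma ncard_curve_inter_projSet (h : IsShiftBasis θ u M)
    (hB : InvariantMod θ u (LinearMap.range B.mulVecLin)) (hθu : pluckerForm B u (θ *ᵥ u) ≠ 0)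
    (hsep : (secantPoly B u M).Separable) :
    (curve M ∩ projSet B).ncard = m := by
  have hMinj : Function.Injective M.mulVec :=
    mulVec_injective_iff_isUnit.mpr ((isUnit_iff_isUnit_det _).mpr h.isUnit_det)
  have hne (x : ℂ) : M *ᵥ veron (m + 1) ![x, 1] ≠ 0 := fun h0 => by
    simpa [veron_affine] using congrFun (hMinj (h0.trans (mulVec_zero M).symm)) 0
  obtain ⟨c, -, hu⟩ := h.exists_smul_last
  have huB := notMem_range_of_pluckerForm_ne_zero (B := B) (fun h0 => hθu (by rw [h0]; rfl))
  have hdeg : (secantPoly B u M).natDegree = m :=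
    natDegree_secantPoly_le.antisymm (le_natDegree_of_ne_zero (h.coeff_secantPoly_ne_zero hθu))
  refine Eq.trans (Eq.symm ?_) ((ncard_isRoot_of_separable hsep).trans hdeg)
  refine Set.ncard_congr (fun x _ => .mk ℂ _ (hne x)) (fun x hx => ?_) (fun x y _ _ hxy => ?_)
    fun P hP => ?_
  · rw [Set.mem_inter_iff, mk_mem_curve, mk_mem_projSet, h.mulVec_veron_mem_range_iff hB hθu]
    exact ⟨mem_cone_iff.mpr (.inl ⟨1, x, one_ne_zero, (one_smul ..).symm⟩), hx⟩
  · obtain ⟨a, ha⟩ := (Projectivization.mk_eq_mk_iff' ..).mp hxy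
    have hv := hMinj ((mulVec_smul ..).trans ha)
    have ha1 : a = 1 := by simpa [veron_affine] using congrFun hv 0
    simpa [veron_affine, ha1] using (congrFun hv 1).symm
  · rcases mem_cone_iff.mp hP.1 with ⟨d, x, hd, hx⟩ | ⟨d, hd, hx⟩
    · refine ⟨x, ?_, ?_⟩
      · have := mem_projSet.mp hP.2
        rw [hx] at this
        exact (h.mulVec_veron_mem_range_iff hB hθu x).mp ((Submodule.smul_mem_iff _ hd).mp this)
      · conv_rhs => rw [← P.mk_rep]
        exact (Projectivization.mk_eq_mk_iff' ..).mpr ⟨d⁻¹, by rw [hx, inv_smul_smul₀ hd]⟩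
    · refine (huB ?_).elim
      have := mem_projSet.mp hP.2
      rw [hx] at this
      rw [hu]
      exact Submodule.smul_mem _ _ ((Submodule.smul_mem_iff _ hd).mp this)

end IsShiftBasis

end SecantCount

section PolynomialFunctions

variable {σ ι κ : Type*}

/-- Functions on `σ → ℂ` given by a polynomial in the coordinates. -/
def IsPolynomialFun (f : (σ → ℂ) → ℂ) : Prop :=
  ∃ F : MvPolynomial σ ℂ, ∀ x, f x = MvPolynomial.eval x F

namespace IsPolynomialFun

lemma const (c : ℂ) : IsPolynomialFun fun _ : σ → ℂ => c := ⟨.C c, fun _ => by simp⟩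

lemma coord (i : σ) : IsPolynomialFun fun x : σ → ℂ => x i := ⟨.X i, fun _ => by simp⟩

variable {f g : (σ → ℂ) → ℂ}

lemma add (hf : IsPolynomialFun f) (hg : IsPolynomialFun g) :
    IsPolynomialFun fun x => f x + g x := by
  obtain ⟨F, hF⟩ := hf
  obtain ⟨G, hG⟩ := hg
  exact ⟨F + G, fun x => by simp only [hF, hG, map_add]⟩

lemma mul (hf : IsPolynomialFun f) (hg : IsPolynomialFun g) :
    IsPolynomialFun fun x => f x * g x := by
  obtain ⟨F, hF⟩ := hf
  obtain ⟨G, hG⟩ := hg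
  exact ⟨F * G, fun x => by simp only [hF, hG, map_mul]⟩

lemma sub (hf : IsPolynomialFun f) (hg : IsPolynomialFun g) :
    IsPolynomialFun fun x => f x - g x := by
  simpa only [sub_eq_add_neg, neg_one_mul] using hf.add ((const (-1)).mul hg)

lemma sum (s : Finset ι) {f : ι → (σ → ℂ) → ℂ} (hf : ∀ i, IsPolynomialFun (f i)) :
    IsPolynomialFun fun x => ∑ i ∈ s, f i x := by
  choose F hF using hf
  exact ⟨∑ i ∈ s, F i, fun x => by simp only [map_sum, hF]⟩

lemma mulVec [Fintype κ] {A : (σ → ℂ) → Matrix ι κ ℂ} {v : (σ → ℂ) → κ → ℂ}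
    (hA : ∀ i j, IsPolynomialFun fun x => A x i j) (hv : ∀ j, IsPolynomialFun fun x => v x j)
    (i : ι) : IsPolynomialFun fun x => (A x *ᵥ v x) i :=
  sum _ fun j => (hA i j).mul (hv j)

variable [Fintype ι] [DecidableEq ι] {A : (σ → ℂ) → Matrix ι ι ℂ}

lemma exists_matrix_eq_map (hA : ∀ i j, IsPolynomialFun fun x => A x i j) :
    ∃ F : Matrix ι ι (MvPolynomial σ ℂ), ∀ x, A x = (MvPolynomial.eval x).mapMatrix F := by
  choose F hF using hA
  exact ⟨.of F, fun x => Matrix.ext fun i j => hF i j x⟩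

lemma det (hA : ∀ i j, IsPolynomialFun fun x => A x i j) :
    IsPolynomialFun fun x => (A x).det := by
  obtain ⟨F, hF⟩ := exists_matrix_eq_map hA
  exact ⟨F.det, fun x => by simp only [hF, RingHom.map_det]⟩

lemma adjugate (hA : ∀ i j, IsPolynomialFun fun x => A x i j) (i j : ι) :
    IsPolynomialFun fun x => (A x).adjugate i j := by
  obtain ⟨F, hF⟩ := exists_matrix_eq_map hA
  exact ⟨F.adjugate i j, fun x => by beta_reduce; rw [hF, ← RingHom.map_adjugate]; rfl⟩

lemma coeff_charpoly (hA : ∀ i j, IsPolynomialFun fun x => A x i j) (k : ℕ) :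
    IsPolynomialFun fun x => (A x).charpoly.coeff k := by
  obtain ⟨F, hF⟩ := exists_matrix_eq_map hA
  exact ⟨F.charpoly.coeff k, fun x => by
    beta_reduce; rw [hF, RingHom.mapMatrix_apply, charpoly_map, coeff_map]⟩

lemma pow_apply (hA : ∀ i j, IsPolynomialFun fun x => A x i j) (k : ℕ) (i j : ι) :
    IsPolynomialFun fun x => (A x ^ k) i j := by
  obtain ⟨F, hF⟩ := exists_matrix_eq_map hA
  exact ⟨(F ^ k) i j, fun x => by beta_reduce; rw [hF, ← map_pow]; rfl⟩

lemma resultant {a b : (σ → ℂ) → ℂ[X]} (ha : ∀ k, IsPolynomialFun fun x => (a x).coeff k)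
    (hb : ∀ k, IsPolynomialFun fun x => (b x).coeff k) (r s : ℕ) :
    IsPolynomialFun fun x => (a x).resultant (b x) r s := by
  refine det fun i j => ?_
  simp only [sylvester, of_apply]
  refine j.addCases (fun j₁ => ?_) fun j₁ => ?_
  · simp only [Fin.addCases_left]
    split_ifs
    exacts [hb _, const 0]
  · simp only [Fin.addCases_right]
    split_ifs
    exacts [ha _, const 0]

end IsPolynomialFun

/-- The neighbourhoods of `x₀` in the Zariski topology of `σ → ℂ`. -/
def zariskiNhds (x₀ : σ → ℂ) : Filter (σ → ℂ) where
  sets := {s | ∃ F : MvPolynomial σ ℂ,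
    MvPolynomial.eval x₀ F ≠ 0 ∧ ∀ x, MvPolynomial.eval x F ≠ 0 → x ∈ s}
  univ_sets := ⟨1, by simp, fun _ _ => trivial⟩
  sets_of_superset := fun ⟨F, hF, h⟩ hst => ⟨F, hF, fun x hx => hst (h x hx)⟩
  inter_sets := fun ⟨F, hF, h⟩ ⟨G, hG, h'⟩ => by
    refine ⟨F * G, by simp [hF, hG], fun x hx => ?_⟩
    rw [map_mul, mul_ne_zero_iff] at hx
    exact ⟨h x hx.1, h' x hx.2⟩

lemma IsPolynomialFun.eventually_ne {f : (σ → ℂ) → ℂ} (hf : IsPolynomialFun f) {x₀ : σ → ℂ}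
    (h : f x₀ ≠ 0) : ∀ᶠ x in zariskiNhds x₀, f x ≠ 0 := by
  obtain ⟨F, hF⟩ := hf
  exact ⟨F, by rwa [← hF], fun x hx => by rwa [← hF] at hx⟩

section LinearSystems

variable {E : Type*} [AddCommGroup E] [Module ℂ E] (β : Module.Basis κ ℂ E)
  {x₀ : σ → ℂ}

lemma exists_polynomial_solution [Finite κ] {T : (σ → ℂ) → E →ₗ[ℂ] κ → ℂ}
    (hT : ∀ i k, IsPolynomialFun fun x => T x (β k) i) (hinj : Function.Injective (T x₀))
    (b : κ → ℂ) :
    ∃ (d : (σ → ℂ) → ℂ) (y : (σ → ℂ) → E), IsPolynomialFun d ∧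
      (∀ k, IsPolynomialFun fun x => β.repr (y x) k) ∧ d x₀ = 1 ∧
      (∀ x, T x (y x) = d x • b) ∧ ∀ x, d x ≠ 0 → Function.Injective (T x) := by
  classical
  cases nonempty_fintype κ
  let A (x : σ → ℂ) : Matrix κ κ ℂ := LinearMap.toMatrix β (Pi.basisFun ℂ κ) (T x)
  have hA (x : σ → ℂ) (w : E) : A x *ᵥ β.equivFun w = T x w :=
    LinearMap.toMatrix_mulVec_repr β (Pi.basisFun ℂ κ) (T x) w
  have hA_poly (i k : κ) : IsPolynomialFun fun x => A x i k := by
    simpa only [A, LinearMap.toMatrix_apply, Pi.basisFun_repr] using hT i k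
  have hdet (x : σ → ℂ) : Function.Injective (T x) ↔ (A x).det ≠ 0 := by
    rw [← isUnit_iff_ne_zero, ← isUnit_iff_isUnit_det, ← mulVec_injective_iff_isUnit,
      ← Function.Injective.of_comp_iff' _ β.equivFun.bijective]
    exact iff_of_eq (congrArg _ (funext fun w => (hA x w).symm))
  have hdet₀ := (hdet x₀).mp hinj
  let c := (A x₀).det⁻¹
  let y (x : σ → ℂ) : E := β.equivFun.symm ((A x).adjugate *ᵥ c • b)
  have hy (x : σ → ℂ) : β.equivFun (y x) = (A x).adjugate *ᵥ c • b :=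
    β.equivFun.apply_symm_apply _
  refine ⟨fun x => c * (A x).det, y, (IsPolynomialFun.const c).mul (.det hA_poly), fun k => ?_,
    inv_mul_cancel₀ hdet₀, fun x => ?_, fun x hx => (hdet x).mpr (right_ne_zero_of_mul hx)⟩
  · simp only [← Module.Basis.equivFun_apply, hy]
    exact .mulVec (v := fun _ => c • b) (.adjugate hA_poly) (fun j => .const _) k
  · rw [← hA, hy, mulVec_mulVec, mul_adjugate, smul_mulVec, one_mulVec, smul_smul, mul_comm]

/-- The system of the equations `L` and `φ`, indexed by `κ` along a bijection `e`. -/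
def bordered (e : Option ι ≃ κ) (φ : E →ₗ[ℂ] ℂ) (L : E →ₗ[ℂ] ι → ℂ) : E →ₗ[ℂ] κ → ℂ :=
  .pi fun i => (e.symm i).elim φ fun r => .proj r ∘ₗ L

section Bordered

variable {e : Option ι ≃ κ} {φ : E →ₗ[ℂ] ℂ} {L : E →ₗ[ℂ] ι → ℂ} {y : E}

lemma bordered_apply_eq_iff {v : κ → ℂ} :
    bordered e φ L y = v ↔ φ y = v (e none) ∧ ∀ r, L y r = v (e (some r)) := by
  simp [funext_iff, ← e.forall_congr_right, Option.forall, bordered]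

lemma injective_bordered (hφ : φ y ≠ 0) (hker : LinearMap.ker L = ℂ ∙ y) :
    Function.Injective (bordered e φ L) := by
  refine (injective_iff_map_eq_zero _).mpr fun w hw => ?_
  obtain ⟨hφw, hLw⟩ := bordered_apply_eq_iff.mp hw
  obtain ⟨a, rfl⟩ := Submodule.mem_span_singleton.mp
    (hker ▸ LinearMap.mem_ker.mpr (funext hLw) : w ∈ ℂ ∙ y)
  rw [map_smul, smul_eq_mul] at hφw
  rw [(mul_eq_zero.mp hφw).resolve_right hφ, zero_smul]

lemma ker_eq_span_of_injective_bordered (hinj : Function.Injective (bordered e φ L))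
    (hφ : φ y ≠ 0) (hy : L y = 0) : LinearMap.ker L = ℂ ∙ y := by
  refine le_antisymm (fun w hw => Submodule.mem_span_singleton.mpr ⟨φ w / φ y, hinj ?_⟩) ?_
  · obtain ⟨hφw, hLw⟩ := bordered_apply_eq_iff.mp (rfl : bordered e φ L w = _)
    refine bordered_apply_eq_iff.mpr ⟨?_, fun r => ?_⟩
    · rw [map_smul, smul_eq_mul, div_mul_cancel₀ _ hφ, hφw]
    · rw [map_smul, hy, smul_zero, ← hLw, LinearMap.mem_ker.mp hw]
  · rwa [Submodule.span_singleton_le_iff_mem, LinearMap.mem_ker]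

end Bordered

theorem exists_polynomial_ker_eq_span [Fintype ι] [Fintype κ]
    (hcard : Fintype.card ι + 1 = Fintype.card κ)
    {L : (σ → ℂ) → E →ₗ[ℂ] ι → ℂ} (hL : ∀ i k, IsPolynomialFun fun x => L x (β k) i)
    {y₀ : E} (hy₀ : y₀ ≠ 0) (hker : LinearMap.ker (L x₀) = ℂ ∙ y₀) :
    ∃ y : (σ → ℂ) → E, (∀ k, IsPolynomialFun fun x => β.repr (y x) k) ∧ y x₀ = y₀ ∧
      ∀ᶠ x in zariskiNhds x₀, LinearMap.ker (L x) = ℂ ∙ y x := by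
  classical
  obtain ⟨k₀, hk₀⟩ : ∃ k, β.coord k y₀ ≠ 0 := by
    by_contra! h
    exact hy₀ (β.repr.map_eq_zero_iff.mp (Finsupp.ext h))
  obtain ⟨e⟩ : Nonempty (Option ι ≃ κ) :=
    ⟨Fintype.equivOfCardEq (by rw [Fintype.card_option, hcard])⟩
  let T (x : σ → ℂ) : E →ₗ[ℂ] κ → ℂ := bordered e (β.coord k₀) (L x)
  have hT_poly (i k : κ) : IsPolynomialFun fun x => T x (β k) i := by
    obtain ⟨_ | r, rfl⟩ := e.surjective i
    · simpa [T, bordered] using IsPolynomialFun.const _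
    · simpa [T, bordered] using hL r k
  have hinj : Function.Injective (T x₀) := injective_bordered hk₀ hker
  obtain ⟨d, y, hd, hy, hd₀, hTy, hinj'⟩ :=
    exists_polynomial_solution β hT_poly hinj (Pi.single (e none) (β.coord k₀ y₀))
  have hyk (x : σ → ℂ) : β.coord k₀ (y x) = d x * β.coord k₀ y₀ := by
    simpa using (bordered_apply_eq_iff.mp (hTy x)).1
  have hLy (x : σ → ℂ) : L x (y x) = 0 :=
    funext fun r => by simpa using (bordered_apply_eq_iff.mp (hTy x)).2 r
  refine ⟨y, hy, hinj ?_, ?_⟩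
  · rw [hTy, hd₀, one_smul]
    refine (bordered_apply_eq_iff.mpr ⟨by simp, fun r => ?_⟩).symm
    simp [LinearMap.mem_ker.mp (hker ▸ Submodule.mem_span_singleton_self y₀)]
  · filter_upwards [hd.eventually_ne (hd₀.trans_ne one_ne_zero)] with x hx
    exact ker_eq_span_of_injective_bordered (hinj' x hx) (hyk x ▸ mul_ne_zero hx hk₀) (hLy x)

end LinearSystems

end PolynomialFunctions

section Incidence

variable {m q l : ℕ}

/-- The equation of the hyperplane through `u` and `z` obtained from their coordinates `0`, `k`
and `m + 1`; these hyperplanes cut out the line through `u` and `z` as soon as the minor at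
the coordinates `0` and `m + 1` does not vanish. -/
def lineForm (u z : Fin (m + 2) → ℂ) (k : Fin m) : (Fin (m + 2) → ℂ) →ₗ[ℂ] ℂ :=
  let i := k.succ.castSucc
  (u 0 * z (Fin.last _) - u (Fin.last _) * z 0) • .proj i +
    (u (Fin.last _) * z i - u i * z (Fin.last _)) • .proj 0 +
    (u i * z 0 - u 0 * z i) • .proj (Fin.last _)

variable {u w z : Fin (m + 2) → ℂ}

lemma lineForm_apply (k : Fin m) :
    lineForm u z k w =
      (u 0 * z (Fin.last _) - u (Fin.last _) * z 0) * w k.succ.castSucc +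
      (u (Fin.last _) * z k.succ.castSucc - u k.succ.castSucc * z (Fin.last _)) * w 0 +
      (u k.succ.castSucc * z 0 - u 0 * z k.succ.castSucc) * w (Fin.last _) :=
  rfl

lemma forall_lineForm_eq_zero_iff
    (h : u 0 * z (Fin.last _) - u (Fin.last _) * z 0 ≠ 0) :
    (∀ k, lineForm u z k w = 0) ↔ ∃ a b : ℂ, w = a • z + b • u := by
  simp only [lineForm_apply]
  constructor
  · intro hw
    refine ⟨(u 0 * w (Fin.last _) - u (Fin.last _) * w 0) /
        (u 0 * z (Fin.last _) - u (Fin.last _) * z 0),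
      (z (Fin.last _) * w 0 - z 0 * w (Fin.last _)) /
        (u 0 * z (Fin.last _) - u (Fin.last _) * z 0), ?_⟩
    ext i
    simp only [Pi.add_apply, Pi.smul_apply, smul_eq_mul]
    rw [div_mul_eq_mul_div, div_mul_eq_mul_div, ← add_div, eq_div_iff h]
    refine Fin.lastCases ?_ (Fin.cases ?_ fun k => ?_) i
    · ring
    · rw [Fin.castSucc_zero]; ring
    · linear_combination hw k
  · rintro ⟨a, b, rfl⟩ k
    simp only [Pi.add_apply, Pi.smul_apply, smul_eq_mul]
    ring

/-- Modulo `u`, every point of the family `z` is an eigenvector of `θ` and every subspace of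
the family `B` is invariant under `θ`. -/
structure IsIncident (θ : Matrix (Fin (m + 2)) (Fin (m + 2)) ℂ) (u : Fin (m + 2) → ℂ)
    (z : Fin q → Fin (m + 2) → ℂ) (B : Fin l → Matrix (Fin (m + 2)) (Fin m) ℂ) : Prop where
  point (i : Fin q) : InvariantMod θ u (ℂ ∙ z i)
  space (j : Fin l) : InvariantMod θ u (LinearMap.range (B j).mulVecLin)

/-- The normalization that singles out one endomorphism among all `renormalize θ u 1 e f`. -/
def IsNormalized (θ : Matrix (Fin (m + 2)) (Fin (m + 2)) ℂ) : Prop :=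
  (∀ j, θ (Fin.last _) j = 0) ∧ θ 0 0 = 0

/-- The linear equations on `θ` expressing `IsIncident θ u z B` and `IsNormalized θ`. -/
def incidenceMap (u : Fin (m + 2) → ℂ) (z : Fin q → Fin (m + 2) → ℂ)
    (B : Fin l → Matrix (Fin (m + 2)) (Fin m) ℂ) :
    Matrix (Fin (m + 2)) (Fin (m + 2)) ℂ →ₗ[ℂ]
      ((Fin q × Fin m) ⊕ (Fin l × Fin m)) ⊕ (Fin (m + 2) ⊕ Unit) → ℂ :=
  .pi <| Sum.elim
    (Sum.elim (fun s => lineForm u (z s.1) s.2 ∘ₗ (mulVecBilin ℂ ℂ).flip (z s.1))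
      fun s => pluckerForm (B s.1) u ∘ₗ (mulVecBilin ℂ ℂ).flip ((B s.1).col s.2))
    (Sum.elim (fun j => entryLinearMap ℂ ℂ (Fin.last _) j) fun _ => entryLinearMap ℂ ℂ 0 0)

lemma invariantMod_range_iff {θ : Matrix (Fin (m + 2)) (Fin (m + 2)) ℂ}
    {B : Matrix (Fin (m + 2)) (Fin m) ℂ} (h : pluckerForm B u ≠ 0) :
    InvariantMod θ u (LinearMap.range B.mulVecLin) ↔
      ∀ k, pluckerForm B u (θ *ᵥ B.col k) = 0 := by
  simp only [← LinearMap.mem_ker, ker_pluckerForm h]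
  rw [InvariantMod, range_mulVecLin, Submodule.map_span_le]
  simp

variable {z : Fin q → Fin (m + 2) → ℂ} {B : Fin l → Matrix (Fin (m + 2)) (Fin m) ℂ}
  {θ : Matrix (Fin (m + 2)) (Fin (m + 2)) ℂ}

lemma incidenceMap_eq_zero_iff
    (hz : ∀ i, u 0 * z i (Fin.last _) - u (Fin.last _) * z i 0 ≠ 0)
    (hB : ∀ j, pluckerForm (B j) u ≠ 0) :
    incidenceMap u z B θ = 0 ↔ IsIncident θ u z B ∧ IsNormalized θ := by
  have hpoint (i : Fin q) := forall_lineForm_eq_zero_iff (w := θ *ᵥ z i) (hz i)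
  have hspace (j : Fin l) := invariantMod_range_iff (θ := θ) (hB j)
  have hinc : IsIncident θ u z B ↔ (∀ i, InvariantMod θ u (ℂ ∙ z i)) ∧
      ∀ j, InvariantMod θ u (LinearMap.range (B j).mulVecLin) :=
    ⟨fun h => ⟨h.1, h.2⟩, fun h => ⟨h.1, h.2⟩⟩
  simp only [hinc, invariantMod_span_singleton_iff, ← hpoint, hspace, IsNormalized]
  simp only [funext_iff, Sum.forall, Prod.forall]
  exact and_congr_right fun _ => and_congr_right fun _ => ⟨fun h => h (), fun h _ => h⟩

lemma exists_isNormalized_renormalize (hu : u (Fin.last _) ≠ 0)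
    (θ : Matrix (Fin (m + 2)) (Fin (m + 2)) ℂ) :
    ∃ e f, IsNormalized (renormalize θ u 1 e f) := by
  let f₀ := -(θ (Fin.last _) 0 / u (Fin.last _))
  let e := -(θ 0 0 + u 0 * f₀)
  let f (j : Fin (m + 2)) : ℂ :=
    -((θ (Fin.last _) j + e * (1 : Matrix (Fin (m + 2)) _ ℂ) (Fin.last _) j) / u (Fin.last _))
  refine ⟨e, f, fun j => ?_, ?_⟩
  · simp only [renormalize, one_smul, Matrix.add_apply, Matrix.smul_apply, smul_eq_mul,
      vecMulVec_apply, f]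
    field_simp
    ring
  · have h0 : (1 : Matrix (Fin (m + 2)) (Fin (m + 2)) ℂ) (Fin.last _) 0 = 0 :=
      one_apply_ne (Fin.last_pos.ne')
    simp only [renormalize, one_smul, Matrix.add_apply, Matrix.smul_apply, smul_eq_mul,
      vecMulVec_apply, h0,
      one_apply_eq, e, f, f₀]
    ring

lemma eigencone_zero : eigencone (0 : Matrix (Fin (m + 2)) (Fin (m + 2)) ℂ) u = {0}ᶜ := by
  ext x
  simp only [eigencone, invariantMod_span_singleton_iff, Set.mem_ofPred_eq,
    Set.mem_compl_singleton_iff, and_iff_left_iff_imp]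
  exact fun _ => .inr ⟨0, 0, by simp⟩

lemma invariantMod_of_mem_eigencone {x : Fin (m + 2) → ℂ} (hx : x ∈ eigencone θ u)
    (hxu : x ∉ ℂ ∙ u) : InvariantMod θ u (ℂ ∙ x) :=
  hx.2.resolve_left hxu

/-- The curve `M` passes through `u` and through the points of the family `z`, and it is
`m`-secant to the subspaces of the family `B`. -/
structure IsSolution (M : Matrix (Fin (m + 2)) (Fin (m + 2)) ℂ) (u : Fin (m + 2) → ℂ)
    (z : Fin q → Fin (m + 2) → ℂ) (B : Fin l → Matrix (Fin (m + 2)) (Fin m) ℂ) : Prop where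
  isUnit_det : IsUnit M.det
  base : u ∈ cone M
  point (i : Fin q) : z i ∈ cone M
  space (j : Fin l) : (curve M ∩ projSet (B j)).ncard = m

lemma IsSolution.isIncident (hm : 1 ≤ m) {M : Matrix (Fin (m + 2)) (Fin (m + 2)) ℂ}
    (h : IsSolution M u z B) (hcone : cone M = eigencone θ u) (hz : ∀ i, z i ∉ ℂ ∙ u)
    (hB : ∀ j, pluckerForm (B j) u ≠ 0) :
    IsIncident θ u z B where
  point i := invariantMod_of_mem_eigencone (hcone ▸ h.point i) (hz i)
  space j := by
    obtain ⟨v, hv, -, hspan⟩ :=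
      exists_span_veron_eq_range hm (by omega) h.isUnit_det
        (rank_eq_of_pluckerForm_ne_zero (hB j)) (h.space j)
    rw [← hspan]
    refine invariantMod_span fun i => ?_
    have hmem : M *ᵥ veron (m + 1) (v i) ∈ eigencone θ u :=
      hcone ▸ ⟨v i, hv i, 1, one_ne_zero, (one_smul ..).symm⟩
    refine invariantMod_of_mem_eigencone hmem fun hu =>
      notMem_range_of_pluckerForm_ne_zero (hB j) ?_
    rw [← hspan]
    obtain ⟨a, ha⟩ := Submodule.mem_span_singleton.mp hu
    have ha0 : a ≠ 0 := fun h0 => hmem.1 (by rw [← ha, h0, zero_smul])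
    rw [← Submodule.smul_mem_iff _ ha0, ha]
    exact Submodule.subset_span ⟨i, rfl⟩

theorem existsUnique_curve (hm : 1 ≤ m) (hinc : IsIncident θ u z B)
    (huniq : ∀ θ', IsIncident θ' u z B → IsNormalized θ' → θ' ∈ ℂ ∙ θ)
    (hu : u (Fin.last _) ≠ 0) (hz : ∀ i, z i ∉ ℂ ∙ u)
    (hdet : (hornerMatrix θ u).det ≠ 0) (hθu : ∀ j, pluckerForm (B j) u (θ *ᵥ u) ≠ 0)
    (hsep : ∀ j, (secantPoly (B j) u (hornerMatrix θ u)).Separable) :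
    ∃! C : Set (PP (m + 1)), ∃ M, C = curve M ∧ IsSolution M u z B := by
  have hshift := isShiftBasis_hornerMatrix θ u hdet.isUnit
  have hcone : cone (hornerMatrix θ u) = eigencone θ u := hshift.cone_eq_eigencone
  have hu0 : u ≠ 0 := fun h => hu (by rw [h]; rfl)
  have hz0 (i : Fin q) : z i ≠ 0 := fun h => hz i (h ▸ zero_mem _)
  have hB (j : Fin l) : pluckerForm (B j) u ≠ 0 := fun h => hθu j (by rw [h]; rfl)
  refine ⟨_, ⟨_, rfl, hdet.isUnit, ?_, fun i => ?_, fun j => ?_⟩, ?_⟩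
  · exact hcone ▸ ⟨hu0, .inl (Submodule.mem_span_singleton_self u)⟩
  · exact hcone ▸ ⟨hz0 i, .inr (hinc.point i)⟩
  · exact hshift.ncard_curve_inter_projSet (hinc.space j) (hθu j) (hsep j)
  · rintro _ ⟨M, rfl, hM⟩
    obtain ⟨θ', hθ'⟩ := exists_cone_eq_eigencone hM.isUnit_det hM.base
    obtain ⟨e, f, hnorm⟩ := exists_isNormalized_renormalize hu θ'
    rw [← eigencone_renormalize one_ne_zero e f] at hθ'
    obtain ⟨κ, hκ⟩ := Submodule.mem_span_singleton.mp
      (huniq _ (hM.isIncident hm hθ' hz hB) hnorm)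
    have hκ0 : κ ≠ 0 := by
      rintro rfl
      rw [← hκ, zero_smul, eigencone_zero] at hθ'
      exact cone_ne_compl_zero (by omega) hM.isUnit_det hθ'
    have : cone M = cone (hornerMatrix θ u) := by
      rw [hθ', ← hκ, hcone, ← eigencone_renormalize (θ := θ) hκ0 0 0]
      simp [renormalize, vecMulVec_zero]
    rw [curve, this, curve]

end Incidence

section Deformation

variable {σ : Type*} {m q l : ℕ}

namespace IsPolynomialFun

variable {u v : (σ → ℂ) → Fin (m + 2) → ℂ} {B : (σ → ℂ) → Matrix (Fin (m + 2)) (Fin m) ℂ}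
  {θ : (σ → ℂ) → Matrix (Fin (m + 2)) (Fin (m + 2)) ℂ}

lemma lineForm {z : (σ → ℂ) → Fin (m + 2) → ℂ} (hu : ∀ i, IsPolynomialFun fun x => u x i)
    (hz : ∀ i, IsPolynomialFun fun x => z x i) (hv : ∀ i, IsPolynomialFun fun x => v x i)
    (k : Fin m) : IsPolynomialFun fun x => lineForm (u x) (z x) k (v x) := by
  simp only [lineForm_apply]
  exact (((((hu _).mul (hz _)).sub ((hu _).mul (hz _))).mul (hv _)).add
    ((((hu _).mul (hz _)).sub ((hu _).mul (hz _))).mul (hv _))).add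
    ((((hu _).mul (hz _)).sub ((hu _).mul (hz _))).mul (hv _))

lemma pluckerForm (hB : ∀ i j, IsPolynomialFun fun x => B x i j)
    (hu : ∀ i, IsPolynomialFun fun x => u x i) (hv : ∀ i, IsPolynomialFun fun x => v x i) :
    IsPolynomialFun fun x => pluckerForm (B x) (u x) (v x) := by
  simp only [pluckerForm_apply]
  refine .det fun i j => ?_
  refine Fin.cases (hu j) (Fin.cases (hv j) fun k => hB j k) i

lemma hornerMatrix (hθ : ∀ i j, IsPolynomialFun fun x => θ x i j)
    (hu : ∀ i, IsPolynomialFun fun x => u x i) (r j : Fin (m + 2)) :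
    IsPolynomialFun fun x => hornerMatrix (θ x) (u x) r j := by
  simp only [_root_.hornerMatrix, of_apply, hornerVec, Finset.sum_apply, Pi.smul_apply,
    smul_eq_mul]
  exact sum _ fun k => (coeff_charpoly hθ _).mul (.mulVec (pow_apply hθ k) hu r)

lemma coeff_secantPoly {M : (σ → ℂ) → Matrix (Fin (m + 2)) (Fin (m + 2)) ℂ}
    (hB : ∀ i j, IsPolynomialFun fun x => B x i j) (hu : ∀ i, IsPolynomialFun fun x => u x i)
    (hM : ∀ i j, IsPolynomialFun fun x => M x i j) (k : ℕ) :
    IsPolynomialFun fun x => (secantPoly (B x) (u x) (M x)).coeff k := by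
  obtain hk | hk := lt_or_ge k (m + 1)
  · lift k to Fin (m + 1) using hk
    simp only [_root_.coeff_secantPoly]
    exact pluckerForm hB hu (.mulVec hM fun j => .const _)
  · simpa only [coeff_eq_zero_of_natDegree_lt (natDegree_secantPoly_le.trans_lt hk)]
      using const 0

lemma incidenceMap {z : (σ → ℂ) → Fin q → Fin (m + 2) → ℂ}
    {B : (σ → ℂ) → Fin l → Matrix (Fin (m + 2)) (Fin m) ℂ}
    (hu : ∀ r, IsPolynomialFun fun x => u x r) (hz : ∀ i r, IsPolynomialFun fun x => z x i r)
    (hB : ∀ j r k, IsPolynomialFun fun x => B x j r k)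
    (hθ : ∀ i j, IsPolynomialFun fun x => θ x i j) :
    ∀ i, IsPolynomialFun fun x => incidenceMap (u x) (z x) (B x) (θ x) i
  | .inl (.inl (i, k)) => lineForm hu (hz i) (mulVec hθ (hz i)) k
  | .inl (.inr (j, k)) => pluckerForm (hB j) hu (mulVec hθ fun r => hB j r k)
  | .inr (.inl j) => hθ (Fin.last _) j
  | .inr (.inr _) => hθ 0 0

end IsPolynomialFun

lemma separable_iff_resultant_ne_zero {g : ℂ[X]} (hm : 1 ≤ m) (hg : g.natDegree = m) :
    g.Separable ↔ g.resultant (derivative g) m (m - 1) ≠ 0 := by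
  have hg' : (derivative g).natDegree = m - 1 := by rw [natDegree_derivative, hg]
  have hg0 : g ≠ 0 := by rintro rfl; simp at hg; omega
  rw [← hg', ← hg, Ne, resultant_eq_zero_iff, not_and, not_not]
  exact ⟨fun h _ => h, fun h => h (.inl hg0)⟩

/-- A configuration of points `e`, `z` and subspaces `B`, where `e` is the last basis vector,
that is incident to the standard curve and to which no other normalized endomorphism than the
multiples of the shift is incident. -/
structure IsRigid (z : Fin q → Fin (m + 2) → ℂ) (B : Fin l → Matrix (Fin (m + 2)) (Fin m) ℂ) :
    Prop where
  point_zero_ne (i : Fin q) : z i 0 ≠ 0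
  isIncident : IsIncident (shift (m + 1)) (Pi.single (Fin.last _) 1) z B
  pluckerForm_ne (j : Fin l) : pluckerForm (B j) (Pi.single (Fin.last _) 1)
    (shift (m + 1) *ᵥ Pi.single (Fin.last _) 1) ≠ 0
  separable (j : Fin l) : (secantPoly (B j) (Pi.single (Fin.last _) 1) 1).Separable
  mem_span {θ : Matrix (Fin (m + 2)) (Fin (m + 2)) ℂ} :
    IsIncident θ (Pi.single (Fin.last _) 1) z B → IsNormalized θ → θ ∈ ℂ ∙ shift (m + 1)

lemma isNormalized_shift : IsNormalized (shift (m + 1)) :=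
  ⟨fun j => if_neg j.2.ne, by simp [shift]⟩

namespace IsRigid

lemma ker_incidenceMap {z : Fin q → Fin (m + 2) → ℂ}
    {B : Fin l → Matrix (Fin (m + 2)) (Fin m) ℂ} (h : IsRigid z B) :
    LinearMap.ker (incidenceMap (Pi.single (Fin.last _) 1) z B) = ℂ ∙ shift (m + 1) := by
  have hz (i : Fin q) : (Pi.single (Fin.last (m + 1)) 1 : Fin (m + 2) → ℂ) 0 * z i (Fin.last _) -
      (Pi.single (Fin.last (m + 1)) 1 : Fin (m + 2) → ℂ) (Fin.last _) * z i 0 ≠ 0 := by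
    simpa using h.point_zero_ne i
  have hB (j : Fin l) : pluckerForm (B j) (Pi.single (Fin.last _) 1) ≠ 0 :=
    fun h0 => h.pluckerForm_ne j (by rw [h0]; rfl)
  refine le_antisymm (fun θ hθ => ?_) ?_
  · rw [LinearMap.mem_ker, incidenceMap_eq_zero_iff hz hB] at hθ
    exact h.mem_span hθ.1 hθ.2
  · rw [Submodule.span_singleton_le_iff_mem, LinearMap.mem_ker, incidenceMap_eq_zero_iff hz hB]
    exact ⟨h.isIncident, isNormalized_shift⟩

variable {u : (σ → ℂ) → Fin (m + 2) → ℂ} {z : (σ → ℂ) → Fin q → Fin (m + 2) → ℂ}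
  {B : (σ → ℂ) → Fin l → Matrix (Fin (m + 2)) (Fin m) ℂ} {x₀ : σ → ℂ}

lemma eventually_minor_ne_zero (hu : ∀ r, IsPolynomialFun fun x => u x r)
    (hz : ∀ i r, IsPolynomialFun fun x => z x i r) (hu₀ : u x₀ = Pi.single (Fin.last _) 1)
    (h : IsRigid (z x₀) (B x₀)) :
    ∀ᶠ x in zariskiNhds x₀, ∀ i, u x 0 * z x i (Fin.last _) - u x (Fin.last _) * z x i 0 ≠ 0 :=
  Filter.eventually_all.mpr fun i =>
    (((hu _).mul (hz i _)).sub ((hu _).mul (hz i _))).eventually_ne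
      (by simpa [hu₀] using h.point_zero_ne i)

lemma exists_polynomial_isIncident (hql : q + l = m + 3)
    (hu : ∀ r, IsPolynomialFun fun x => u x r) (hz : ∀ i r, IsPolynomialFun fun x => z x i r)
    (hB : ∀ j r k, IsPolynomialFun fun x => B x j r k)
    (hu₀ : u x₀ = Pi.single (Fin.last _) 1) (h : IsRigid (z x₀) (B x₀)) :
    ∃ θ : (σ → ℂ) → Matrix (Fin (m + 2)) (Fin (m + 2)) ℂ,
      (∀ i j, IsPolynomialFun fun x => θ x i j) ∧ θ x₀ = shift (m + 1) ∧
      ∀ᶠ x in zariskiNhds x₀, ∀ θ', IsIncident θ' (u x) (z x) (B x) ∧ IsNormalized θ' ↔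
        θ' ∈ ℂ ∙ θ x := by
  have hz_ev := h.eventually_minor_ne_zero hu hz hu₀
  have hshift : shift (m + 1) ≠ 0 := fun h0 => by
    simpa [shift] using congrFun₂ h0 0 1
  have hcard : Fintype.card (((Fin q × Fin m) ⊕ (Fin l × Fin m)) ⊕ (Fin (m + 2) ⊕ Unit)) + 1 =
      Fintype.card (Fin (m + 2) × Fin (m + 2)) := by
    simp only [Fintype.card_sum, Fintype.card_prod, Fintype.card_fin, Fintype.card_unit]
    linear_combination m * hql
  obtain ⟨θ, hθ, hθ₀, hθ_ker⟩ := exists_polynomial_ker_eq_span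
    (Matrix.stdBasis ℂ (Fin (m + 2)) (Fin (m + 2))) hcard
    (L := fun x => incidenceMap (u x) (z x) (B x))
    (fun i k => .incidenceMap (θ := fun _ => stdBasis ℂ _ _ k) hu hz hB (fun _ _ => .const _) i)
    hshift (hu₀ ▸ h.ker_incidenceMap)
  refine ⟨θ, fun i j => hθ (i, j), hθ₀, ?_⟩
  have hB_ev : ∀ᶠ x in zariskiNhds x₀, ∀ j, pluckerForm (B x j) (u x) ≠ 0 := by
    refine Filter.eventually_all.mpr fun j => ?_
    filter_upwards [(IsPolynomialFun.pluckerForm (v := fun _ => shift (m + 1) *ᵥ u x₀) (hB j) hu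
      fun i => .const _).eventually_ne (by simpa only [hu₀] using h.pluckerForm_ne j)] with x hx h0
    exact hx (by rw [h0]; rfl)
  filter_upwards [hθ_ker, hz_ev, hB_ev] with x hker hzx hBx θ'
  rw [← hker, LinearMap.mem_ker, incidenceMap_eq_zero_iff hzx hBx]

lemma eventually_separable (hm : 1 ≤ m) (hu : ∀ r, IsPolynomialFun fun x => u x r)
    (hB : ∀ j r k, IsPolynomialFun fun x => B x j r k)
    (hu₀ : u x₀ = Pi.single (Fin.last _) 1) (h : IsRigid (z x₀) (B x₀))
    {M : (σ → ℂ) → Matrix (Fin (m + 2)) (Fin (m + 2)) ℂ}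
    (hM : ∀ i j, IsPolynomialFun fun x => M x i j) (hM₀ : M x₀ = 1) (j : Fin l) :
    ∀ᶠ x in zariskiNhds x₀, (secantPoly (B x j) (u x) (M x)).Separable := by
  have hcoeff (k : ℕ) := IsPolynomialFun.coeff_secantPoly (hB j) hu hM k
  have hcoeff' (k : ℕ) :
      IsPolynomialFun fun x => (derivative (secantPoly (B x j) (u x) (M x))).coeff k := by
    simpa only [coeff_derivative] using (hcoeff (k + 1)).mul (.const _)
  have hdeg {x : σ → ℂ} (hx : (secantPoly (B x j) (u x) (M x)).coeff m ≠ 0) :=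
    natDegree_secantPoly_le.antisymm (le_natDegree_of_ne_zero hx)
  have hlead₀ : (secantPoly (B x₀ j) (u x₀) (M x₀)).coeff m ≠ 0 := by
    rw [hM₀, hu₀, ← hornerMatrix_shift]
    exact (isShiftBasis_hornerMatrix _ _ (by simp [hornerMatrix_shift])).coeff_secantPoly_ne_zero
      (h.pluckerForm_ne j)
  have hres₀ := (separable_iff_resultant_ne_zero hm (hdeg hlead₀)).mp
    (by rw [hM₀, hu₀]; exact h.separable j)
  filter_upwards [(hcoeff m).eventually_ne hlead₀,
    (IsPolynomialFun.resultant hcoeff hcoeff' m (m - 1)).eventually_ne hres₀] with x hlead hres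
  exact (separable_iff_resultant_ne_zero hm (hdeg hlead)).mpr hres

theorem eventually_existsUnique_curve (hm : 1 ≤ m) (hql : q + l = m + 3)
    (hu : ∀ r, IsPolynomialFun fun x => u x r) (hz : ∀ i r, IsPolynomialFun fun x => z x i r)
    (hB : ∀ j r k, IsPolynomialFun fun x => B x j r k)
    (hu₀ : u x₀ = Pi.single (Fin.last _) 1) (h : IsRigid (z x₀) (B x₀)) :
    ∀ᶠ x in zariskiNhds x₀, ∃! C : Set (PP (m + 1)), ∃ M, C = curve M ∧
      IsSolution M (u x) (z x) (B x) := by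
  obtain ⟨θ, hθ, hθ₀, hθ_iff⟩ := h.exists_polynomial_isIncident hql hu hz hB hu₀
  have hhorner₀ : hornerMatrix (θ x₀) (u x₀) = 1 := by rw [hθ₀, hu₀, hornerMatrix_shift]
  have hdet : ∀ᶠ x in zariskiNhds x₀, (hornerMatrix (θ x) (u x)).det ≠ 0 :=
    (IsPolynomialFun.det (.hornerMatrix hθ hu)).eventually_ne (by simp [hhorner₀])
  have hlast : ∀ᶠ x in zariskiNhds x₀, u x (Fin.last _) ≠ 0 :=
    (hu _).eventually_ne (by simp [hu₀])
  have hθu : ∀ᶠ x in zariskiNhds x₀, ∀ j, pluckerForm (B x j) (u x) (θ x *ᵥ u x) ≠ 0 :=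
    Filter.eventually_all.mpr fun j =>
      (IsPolynomialFun.pluckerForm (hB j) hu (.mulVec hθ hu)).eventually_ne
        (by simpa only [hθ₀, hu₀] using h.pluckerForm_ne j)
  have hsep := Filter.eventually_all.mpr
    (h.eventually_separable hm hu hB hu₀ (.hornerMatrix hθ hu) hhorner₀)
  have hz_ev := h.eventually_minor_ne_zero hu hz hu₀
  filter_upwards [hθ_iff, hdet, hlast, hθu, hsep, hz_ev] with x hiff hdet hlast hθu hsep hzu
  have hinc := (hiff (θ x)).mpr (Submodule.mem_span_singleton_self _)
  refine existsUnique_curve hm hinc.1 (fun θ' hinc hnorm => (hiff θ').mp ⟨hinc, hnorm⟩)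
    hlast (fun i hi => hzu i ?_) hdet hθu hsep
  obtain ⟨c, hc⟩ := Submodule.mem_span_singleton.mp hi
  rw [← hc, Pi.smul_apply, Pi.smul_apply, smul_eq_mul, smul_eq_mul]
  ring

end IsRigid

end Deformation

section Genericity

variable {n p l : ℕ}

/-- The indices of the entries of the matrices of a configuration of `p` points and `l`
subspaces of codimension two. -/
abbrev EntryIndex (n p l : ℕ) :=
  (Fin p × Fin (n + 1) × Fin 1) ⊕ (Fin l × Fin (n + 1) × Fin (n - 1))

/-- The configuration of points with the given entries. -/
def pointMatrix (x : EntryIndex n p l → ℂ) (i : Fin p) : Matrix (Fin (n + 1)) (Fin 1) ℂ :=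
  of fun r c => x (.inl (i, r, c))

/-- The configuration of subspaces with the given entries. -/
def spaceMatrix (x : EntryIndex n p l → ℂ) (j : Fin l) : Matrix (Fin (n + 1)) (Fin (n - 1)) ℂ :=
  of fun r c => x (.inr (j, r, c))

/-- The family of all entries of a configuration. -/
def entries (P : Fin p → Matrix (Fin (n + 1)) (Fin 1) ℂ)
    (B : Fin l → Matrix (Fin (n + 1)) (Fin (n - 1)) ℂ) : EntryIndex n p l → ℂ :=
  Sum.elim (fun q => P q.1 q.2.1 q.2.2) fun q => B q.1 q.2.1 q.2.2

lemma isPolynomialFun_pointMatrix (i : Fin p) (r : Fin (n + 1)) (c : Fin 1) :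
    IsPolynomialFun fun x : EntryIndex n p l → ℂ => pointMatrix x i r c :=
  .coord _

lemma isPolynomialFun_spaceMatrix (j : Fin l) (r : Fin (n + 1)) (c : Fin (n - 1)) :
    IsPolynomialFun fun x : EntryIndex n p l → ℂ => spaceMatrix x j r c :=
  .coord _

lemma genHoldsPtsCodim2_of_eventually {P : Fin p → Matrix (Fin (n + 1)) (Fin 1) ℂ}
    {B : Fin l → Matrix (Fin (n + 1)) (Fin (n - 1)) ℂ}
    {Q : (Fin p → Matrix (Fin (n + 1)) (Fin 1) ℂ) →
      (Fin l → Matrix (Fin (n + 1)) (Fin (n - 1)) ℂ) → Prop}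
    (h : ∀ᶠ x in zariskiNhds (entries P B),
      (∀ i, (pointMatrix x i).rank = 1) → (∀ j, (spaceMatrix x j).rank = n - 1) →
        Q (pointMatrix x) (spaceMatrix x)) :
    GenHoldsPtsCodim2 n p l Q := by
  obtain ⟨F, hF, hFQ⟩ := h
  exact ⟨F, fun h0 => hF (by rw [h0, map_zero]), fun P B hP hB hx => hFQ (entries P B) hx hP hB⟩

lemma IsRigid.genHoldsPtsCodim2_existsUnique {m q : ℕ} (hm : 1 ≤ m) (hql : q + l = m + 3)
    {z : Fin q → Fin (m + 2) → ℂ} {B : Fin l → Matrix (Fin (m + 2)) (Fin m) ℂ}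
    (h : IsRigid z B) :
    GenHoldsPtsCodim2 (m + 1) (q + 1) l fun P B =>
      ∃! C : Set (PP (m + 1)), IsRNC (m + 1) C ∧ (∀ i, projSet (P i) ⊆ C) ∧
        ∀ j, (C ∩ projSet (B j)).ncard = m := by
  let P : Fin (q + 1) → Matrix (Fin (m + 2)) (Fin 1) ℂ :=
    Fin.cons (replicateCol _ (Pi.single (Fin.last _) 1)) fun i => replicateCol _ (z i)
  refine genHoldsPtsCodim2_of_eventually (P := P) (B := B) ?_
  have key := IsRigid.eventually_existsUnique_curve (x₀ := entries (n := m + 1) P B)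
    (u := fun x => (pointMatrix x 0).col 0) (z := fun x i => (pointMatrix x i.succ).col 0)
    (B := spaceMatrix) hm hql (fun r => isPolynomialFun_pointMatrix 0 r 0)
    (fun i r => isPolynomialFun_pointMatrix i.succ r 0) isPolynomialFun_spaceMatrix rfl h
  filter_upwards [key] with x hx hP _
  refine (existsUnique_congr fun C => ?_).mp hx
  rw [isRNC_iff_exists_curve]
  constructor
  · rintro ⟨M, rfl, hM⟩
    exact ⟨⟨M, hM.isUnit_det, rfl⟩, fun i => (projSet_subset_curve_iff (hP i)).mpr
      (Fin.cases hM.base hM.point i), hM.space⟩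
  · rintro ⟨⟨M, hM, rfl⟩, hpoint, hspace⟩
    have hcone (i : Fin (q + 1)) := (projSet_subset_curve_iff (hP i)).mp (hpoint i)
    exact ⟨M, rfl, hM, hcone 0, fun i => hcone i.succ, hspace⟩

end Genericity

section ScalarNodes

open Lagrange

lemma exists_eq_mul_nodal {ι : Type*} [Fintype ι] {ρ : ι → ℂ} (hρ : Function.Injective ρ)
    {g : ℂ[X]} {d : ℕ} (hg : g.natDegree ≤ Fintype.card ι + d) (hgρ : ∀ i, g.eval (ρ i) = 0) :
    ∃ L : ℂ[X], L.natDegree ≤ d ∧ g = L * nodal Finset.univ ρ := by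
  have hdvd : nodal Finset.univ ρ ∣ g := Finset.prod_dvd_of_coprime
    (fun i _ j _ hij => pairwise_coprime_X_sub_C hρ hij) fun i _ => dvd_iff_isRoot.mpr (hgρ i)
  obtain ⟨L, rfl⟩ := exists_eq_mul_left_of_dvd hdvd
  refine ⟨L, ?_, rfl⟩
  obtain rfl | hL := eq_or_ne L 0
  · simp
  · rw [natDegree_mul hL nodal_ne_zero, natDegree_nodal, Finset.card_univ] at hg
    omega

/-- The linear map `T`, restricted to the polynomials of degree at most `m`, acts on the value
at `a` as multiplication by `κ`. -/
def IsScalarAt (T : ℂ[X] →ₗ[ℂ] ℂ[X]) (m : ℕ) (a κ : ℂ) : Prop :=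
  ∀ f : ℂ[X], f.natDegree ≤ m → (T f).eval a = κ * f.eval a

variable {T : ℂ[X] →ₗ[ℂ] ℂ[X]} {m : ℕ} {ι : Type*} [Fintype ι] {ν : ι → ℂ}

lemma eq_mul_of_isScalarAt (hT : ∀ f, (T f).natDegree ≤ m + 1) (hν : Function.Injective ν)
    (hcard : m + 2 ≤ Fintype.card ι) {L : ℂ[X]} (hL : L.natDegree ≤ 1)
    (h : ∀ i, IsScalarAt T m (ν i) (L.eval (ν i))) {f : ℂ[X]} (hf : f.natDegree ≤ m) :
    T f = L * f := by
  refine eq_of_natDegree_lt_card_of_eval_eq _ _ hν (fun i => by rw [h i f hf, eval_mul])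
    (lt_of_lt_of_le ?_ hcard)
  have := natDegree_mul_le (p := L) (q := f)
  exact max_lt ((hT f).trans_lt (by omega)) (by omega)

lemma IsScalarAt.eq_eval {a κ : ℂ} (h : IsScalarAt T m a κ) {G L : ℂ[X]} (hG : G.natDegree ≤ m)
    (hTG : T G = L * G) (hGa : G.eval a ≠ 0) : κ = L.eval a :=
  mul_right_cancel₀ hGa (by rw [← h G hG, hTG, eval_mul])

lemma exists_eq_mul_of_isScalarAt (hT : ∀ f, (T f).natDegree ≤ m + 1)
    (hν : Function.Injective ν) (hcard : Fintype.card ι = m + 3)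
    (h : ∀ i, ∃ κ, IsScalarAt T m (ν i) κ) :
    ∃ L : ℂ[X], L.natDegree ≤ 1 ∧ ∀ f : ℂ[X], f.natDegree ≤ m → T f = L * f := by
  classical
  choose κ hκ using h
  obtain ⟨i, j, hij⟩ := Fintype.one_lt_card_iff.mp (by omega : 1 < Fintype.card ι)
  let L := interpolate {i, j} ν κ
  have hL : L.natDegree ≤ 1 := natDegree_le_of_degree_le <|
    (degree_interpolate_le κ hν.injOn).trans_eq (by rw [Finset.card_pair hij])
  have hLi {c : ι} (hc : c ∈ ({i, j} : Finset ι)) : L.eval (ν c) = κ c :=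
    eval_interpolate_at_node κ hν.injOn hc
  suffices hLκ : ∀ c, L.eval (ν c) = κ c from
    ⟨L, hL, fun f => eq_mul_of_isScalarAt hT hν (by omega) hL fun c => hLκ c ▸ hκ c⟩
  intro c
  by_cases hc : c ∈ ({i, j} : Finset ι)
  · exact hLi hc
  -- The polynomial `G` vanishing at the other `m` nodes satisfies `T G = L G`.
  let s : Finset ι := {c, i, j}
  let G := nodal sᶜ ν
  have hs : s.card = 3 := by
    rw [Finset.card_insert_of_notMem hc, Finset.card_pair hij]
  have hG : G.natDegree = m := by
    rw [natDegree_nodal, Finset.card_compl, hs, hcard, Nat.add_sub_cancel]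
  have hGc : G.eval (ν c) ≠ 0 :=
    eval_nodal_not_at_node fun k hk hck => Finset.mem_compl.mp hk
      (hν hck ▸ Finset.mem_insert_self _ _)
  have hTG : T G = L * G := by
    have hν' : Function.Injective fun k : {k // k ≠ c} => ν k := hν.comp Subtype.val_injective
    refine eq_of_natDegree_lt_card_of_eval_eq _ _ hν' (fun ⟨k, hkc⟩ => ?_) ?_
    · dsimp only
      rw [hκ k G hG.le, eval_mul]
      by_cases hk : k ∈ s
      · rw [hLi ((Finset.mem_insert.mp hk).resolve_left hkc)]
      · rw [eval_nodal_at_node (Finset.mem_compl.mpr hk), mul_zero, mul_zero]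
    · have hcard' : Fintype.card {k // k ≠ c} = m + 2 := by
        simp [Fintype.card_subtype_compl, hcard]
      rw [hcard']
      have := natDegree_mul_le (p := L) (q := G)
      exact max_lt ((hT G).trans_lt (by omega)) (by omega)
  exact ((hκ c).eq_eval hG.le hTG hGc).symm

lemma exists_eq_mul_of_isScalarAt_of_nodal (hT : ∀ f, (T f).natDegree ≤ m + 1)
    (hν : Function.Injective ν) (hcard : Fintype.card ι = m + 2)
    (h : ∀ i, ∃ κ, IsScalarAt T m (ν i) κ) {ρ : Fin m → ℂ} (hρ : Function.Injective ρ)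
    (hνρ : ∀ i k, ν i ≠ ρ k) (hTρ : ∀ k, (T (nodal Finset.univ ρ)).eval (ρ k) = 0) :
    ∃ L : ℂ[X], L.natDegree ≤ 1 ∧ ∀ f : ℂ[X], f.natDegree ≤ m → T f = L * f := by
  have hdeg : (nodal Finset.univ ρ).natDegree = m := by
    rw [natDegree_nodal, Finset.card_univ, Fintype.card_fin]
  obtain ⟨L, hL, hTG⟩ := exists_eq_mul_nodal hρ
    ((hT _).trans_eq (by rw [Fintype.card_fin])) hTρ
  refine ⟨L, hL, fun f => eq_mul_of_isScalarAt hT hν hcard.ge hL fun i => ?_⟩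
  obtain ⟨κ, hκ⟩ := h i
  exact hκ.eq_eval hdeg.le hTG (eval_nodal_not_at_node fun k _ => hνρ i k) ▸ hκ

lemma mem_span_of_triangular {G : Fin (m + 1) → ℂ[X]} (hG : ∀ s, (G s).natDegree ≤ m)
    {y : Fin (m + 1) → ℂ} (hlt : ∀ s t, t < s → (G s).eval (y t) = 0)
    (hdiag : ∀ s, (G s).eval (y s) ≠ 0) {f : ℂ[X]} (hf : f.natDegree ≤ m) :
    f ∈ Submodule.span ℂ (Set.range G) := by
  have hmem {g : ℂ[X]} (hg : g.natDegree ≤ m) : g ∈ degreeLT ℂ (m + 1) :=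
    mem_degreeLT.mpr ((degree_le_of_natDegree_le hg).trans_lt (by exact_mod_cast m.lt_succ_self))
  let G' (s : Fin (m + 1)) : degreeLT ℂ (m + 1) := ⟨G s, hmem (hG s)⟩
  let A : Matrix (Fin (m + 1)) (Fin (m + 1)) ℂ := of fun s t => (G s).eval (y t)
  let ev : degreeLT ℂ (m + 1) →ₗ[ℂ] Fin (m + 1) → ℂ :=
    .pi fun t => leval (y t) ∘ₗ (degreeLT ℂ (m + 1)).subtype
  have hA : IsUnit A.det := by
    rw [det_of_isUpperTriangular (M := A) fun s t hts => hlt s t hts]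
    exact (Finset.prod_ne_zero_iff.mpr fun s _ => hdiag s).isUnit
  have hind : LinearIndependent ℂ G' := by
    refine .of_comp ev ?_
    exact linearIndependent_rows_iff_isUnit.mpr ((isUnit_iff_isUnit_det A).mpr hA)
  have hspan := hind.span_eq_top_of_card_eq_finrank
    (by rw [(degreeLTEquiv ℂ (m + 1)).finrank_eq, Module.finrank_fin_fun, Fintype.card_fin])
  have := Submodule.mem_map_of_mem (f := (degreeLT ℂ (m + 1)).subtype)
    (hspan ▸ Submodule.mem_top : (⟨f, hmem hf⟩ : degreeLT ℂ (m + 1)) ∈ _)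
  rwa [Submodule.map_span, ← Set.range_comp] at this

/-- The `m` cyclically consecutive nodes beginning with the node of index `j`. -/
def cyclicWindow {N : ℕ} (ν : ZMod N → ℂ) (m : ℕ) (j : ZMod N) (k : Fin m) : ℂ :=
  ν (j + (k : ℕ))

lemma cyclicWindow_injective {N : ℕ} {ν : ZMod N → ℂ} (hν : Function.Injective ν) (hmN : m < N)
    (j : ZMod N) : Function.Injective (cyclicWindow ν m j) := fun k k' h => by
  have := (ZMod.natCast_eq_natCast_iff' _ _ _).mp (add_left_cancel (hν h))
  rwa [Nat.mod_eq_of_lt (by omega), Nat.mod_eq_of_lt (by omega), Fin.val_inj] at this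

lemma eval_nodal_cyclicWindow_eq_zero_iff {N : ℕ} {ν : ZMod N → ℂ} (hν : Function.Injective ν)
    {i j : ZMod N} :
    (nodal Finset.univ (cyclicWindow ν m j)).eval (ν i) = 0 ↔ ∃ k : Fin m, j + (k : ℕ) = i := by
  rw [eval_nodal, Finset.prod_eq_zero_iff]
  simp only [Finset.mem_univ, true_and, sub_eq_zero, cyclicWindow, hν.eq_iff, eq_comm]

lemma natCast_zmod_ne_zero {N c : ℕ} (hc : 0 < c) (hcN : c < N) : (c : ZMod N) ≠ 0 := fun h =>
  (Nat.le_of_dvd hc ((ZMod.natCast_eq_zero_iff _ _).mp h)).not_gt hcN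

lemma mem_span_nodal_cyclicWindow {N : ℕ} {ν : ZMod N → ℂ} (hν : Function.Injective ν)
    (hmN : m < N) (i : ZMod N) {f : ℂ[X]} (hf : f.natDegree ≤ m) :
    f ∈ Submodule.span ℂ (Set.range fun s : Fin (m + 1) =>
      nodal Finset.univ (cyclicWindow ν m (i - (s : ℕ)))) := by
  refine mem_span_of_triangular (y := fun t => ν (i - (t : ℕ) - 1)) (fun s => ?_)
    (fun s t hts => ?_) (fun s => ?_) hf
  · rw [natDegree_nodal, Finset.card_univ, Fintype.card_fin]
  · obtain ⟨c, hc⟩ := Nat.exists_eq_add_of_lt hts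
    refine (eval_nodal_cyclicWindow_eq_zero_iff hν).mpr ⟨⟨c, by omega⟩, ?_⟩
    rw [hc]
    push_cast
    ring
  · rw [Ne, eval_nodal_cyclicWindow_eq_zero_iff hν]
    rintro ⟨k, hk⟩
    refine natCast_zmod_ne_zero (Nat.succ_pos k) (by omega : k.val + 1 < N) ?_
    push_cast
    linear_combination hk

lemma exists_isScalarAt_of_cyclicWindow {N : ℕ} {ν : ZMod N → ℂ} (hν : Function.Injective ν)
    (hmN : m < N)
    (hTν : ∀ j k, (T (nodal Finset.univ (cyclicWindow ν m j))).eval (cyclicWindow ν m j k) = 0)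
    (i : ZMod N) : ∃ κ, IsScalarAt T m (ν i) κ := by
  let G (s : Fin (m + 1)) : ℂ[X] := nodal Finset.univ (cyclicWindow ν m (i - (s : ℕ)))
  have hlast : (G (Fin.last m)).eval (ν i) ≠ 0 := by
    rw [Ne, eval_nodal_cyclicWindow_eq_zero_iff hν]
    rintro ⟨k, hk⟩
    refine natCast_zmod_ne_zero (Nat.sub_pos_of_lt k.2) ((m.sub_le k).trans_lt hmN) ?_
    rw [Fin.val_last] at hk
    rw [Nat.cast_sub k.2.le]
    linear_combination -hk
  let κ := (T (G (Fin.last m))).eval (ν i) / (G (Fin.last m)).eval (ν i)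
  -- Among the windows `G s`, which span the polynomials of degree at most `m`, only the last one
  -- does not contain `ν i`.
  let δ : ℂ[X] →ₗ[ℂ] ℂ := leval (ν i) ∘ₗ T - κ • leval (ν i)
  have hδ : Submodule.span ℂ (Set.range G) ≤ LinearMap.ker δ := by
    rw [Submodule.span_le]
    rintro _ ⟨s, rfl⟩
    change (T (G s)).eval (ν i) - κ * (G s).eval (ν i) = 0
    obtain rfl | hs := eq_or_ne s (Fin.last m)
    · rw [div_mul_cancel₀ _ hlast, sub_self]
    · have hwin : cyclicWindow ν m (i - (s : ℕ)) ⟨s, Fin.val_lt_last hs⟩ = ν i :=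
        congrArg ν (sub_add_cancel _ _)
      have hT0 := hTν (i - (s : ℕ)) ⟨s, Fin.val_lt_last hs⟩
      rw [hwin] at hT0
      rw [hT0, (eval_nodal_cyclicWindow_eq_zero_iff hν).mpr ⟨⟨s, Fin.val_lt_last hs⟩,
        sub_add_cancel _ _⟩, mul_zero, sub_zero]
  exact ⟨κ, fun f hf => sub_eq_zero.mp (hδ (mem_span_nodal_cyclicWindow hν hmN i hf))⟩

end ScalarNodes

section StandardCurve

open Lagrange

variable {m : ℕ}

/-- The matrix whose columns are the points of the standard curve with the parameters `v`. -/
def veronMatrix (v : Fin m → Fin 2 → ℂ) : Matrix (Fin (m + 2)) (Fin m) ℂ :=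
  of fun r k => veron (m + 1) (v k) r

lemma pluckerForm_veronMatrix (v : Fin m → Fin 2 → ℂ) (a b : Fin 2 → ℂ) :
    pluckerForm (veronMatrix v) (veron (m + 1) a) (veron (m + 1) b) =
      bracket b a * (∏ k, bracket (v k) a) * (∏ k, bracket (v k) b) *
        ∏ i, ∏ j ∈ Finset.Ioi i, bracket (v j) (v i) := by
  have h : (of (vecCons (veron (m + 1) a) (vecCons (veron (m + 1) b) (veronMatrix v).col))) =
      of fun i => veron (m + 1) ((vecCons a (vecCons b v) : Fin (m + 2) → Fin 2 → ℂ) i) := by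
    ext i r
    refine Fin.cases rfl (fun i => Fin.cases rfl (fun i => rfl) i) i
  rw [pluckerForm_apply, h, det_veron, Fin.prod_univ_succ, Fin.prod_univ_succ]
  simp only [Fin.prod_Ioi_zero, Fin.prod_Ioi_succ, Fin.prod_univ_succ, cons_val_zero,
    cons_val_succ]
  ring

lemma range_veronMatrix (v : Fin m → Fin 2 → ℂ) :
    LinearMap.range (veronMatrix v).mulVecLin =
      Submodule.span ℂ (Set.range fun k => veron (m + 1) (v k)) :=
  range_mulVecLin _

section Nodes

variable {ρ : Fin m → ℂ}

lemma pluckerForm_veronMatrix_ne_zero (hρ : Function.Injective ρ) {y : ℂ} (hy : ∀ k, ρ k ≠ y) :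
    pluckerForm (veronMatrix fun k => ![ρ k, 1]) (Pi.single (Fin.last _) 1)
      (veron (m + 1) ![y, 1]) ≠ 0 := by
  rw [← veron_infinity, pluckerForm_veronMatrix]
  simp only [bracket, cons_val_zero, cons_val_one, mul_zero, mul_one, zero_sub, one_mul]
  refine mul_ne_zero (mul_ne_zero (mul_ne_zero (by simp) ?_) ?_) ?_
  · simp
  · exact Finset.prod_ne_zero_iff.mpr fun k _ => sub_ne_zero.mpr (hy k)
  · exact Finset.prod_ne_zero_iff.mpr fun i _ => Finset.prod_ne_zero_iff.mpr fun j hj =>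
      sub_ne_zero.mpr (hρ.ne (Finset.mem_Ioi.mp hj).ne')

lemma exists_secantPoly_veronMatrix (hρ : Function.Injective ρ) :
    ∃ c : ℂ, c ≠ 0 ∧ secantPoly (veronMatrix fun k => ![ρ k, 1]) (Pi.single (Fin.last _) 1) 1 =
      C c * nodal Finset.univ ρ := by
  have heval (x : ℂ) := eval_secantPoly (B := veronMatrix fun k => ![ρ k, 1])
    (u := Pi.single (Fin.last _) 1) (M := 1) one_ne_zero (by rw [one_smul, one_mulVec]) x
  simp only [one_mulVec] at heval
  obtain ⟨L, hL, hg⟩ := exists_eq_mul_nodal hρ (d := 0)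
    (natDegree_secantPoly_le.trans_eq (Fintype.card_fin m).symm) fun k => by
      rw [heval]
      refine pluckerForm_eq_zero_of_mem_range ?_
      rw [range_veronMatrix]
      exact Submodule.subset_span ⟨k, rfl⟩
  obtain ⟨y, hy⟩ := (Set.finite_range ρ).exists_notMem
  refine ⟨L.coeff 0, fun h0 => ?_, by rw [← eq_C_of_natDegree_le_zero hL, hg]⟩
  refine pluckerForm_veronMatrix_ne_zero hρ (fun k hk => hy ⟨k, hk⟩) ?_
  rw [← heval, hg, eq_C_of_natDegree_le_zero hL, h0, C_0, zero_mul, eval_zero]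

lemma separable_secantPoly_veronMatrix (hρ : Function.Injective ρ) :
    (secantPoly (veronMatrix fun k => ![ρ k, 1]) (Pi.single (Fin.last _) 1) 1).Separable := by
  obtain ⟨c, hc, h⟩ := exists_secantPoly_veronMatrix hρ
  rw [h]
  exact (separable_prod_X_sub_C_iff.mpr hρ).unit_mul (isUnit_C.mpr hc.isUnit)

lemma pluckerForm_veronMatrix_shift_ne_zero (hρ : Function.Injective ρ) :
    pluckerForm (veronMatrix fun k => ![ρ k, 1]) (Pi.single (Fin.last _) 1)
      (shift (m + 1) *ᵥ Pi.single (Fin.last _) 1) ≠ 0 := by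
  obtain ⟨c, hc, h⟩ := exists_secantPoly_veronMatrix hρ
  have hcoeff := coeff_secantPoly (B := veronMatrix fun k => ![ρ k, 1])
    (u := Pi.single (Fin.last _) 1) (M := 1) (Fin.last m)
  have hlead : (nodal Finset.univ ρ).coeff m = 1 := by
    have := nodal_monic (s := Finset.univ) (v := ρ)
    rwa [Monic, leadingCoeff, natDegree_nodal, Finset.card_univ, Fintype.card_fin] at this
  rw [h, coeff_C_mul, Fin.val_last, hlead, mul_one, one_mulVec] at hcoeff
  rwa [shift_mulVec_single_last, ← hcoeff]

end Nodes

lemma invariantMod_shift_veron (x : ℂ) :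
    InvariantMod (shift (m + 1)) (Pi.single (Fin.last _) 1) (ℂ ∙ veron (m + 1) ![x, 1]) :=
  invariantMod_span_singleton_iff.mpr
    ⟨x, -x ^ (m + 2), by rw [shift_mulVec_veron, neg_smul, sub_eq_add_neg]⟩

end StandardCurve

section DualAction

open Lagrange

variable {m : ℕ}

/-- The coefficients in degrees less than `N`; for polynomials of these degrees, the values of
the corresponding linear form on the standard curve are the values of the polynomial. -/
def coeffVec (N : ℕ) : ℂ[X] →ₗ[ℂ] Fin N → ℂ :=
  .pi fun i => lcoeff ℂ i

lemma coeffVec_dotProduct_veron {f : ℂ[X]} (hf : f.natDegree ≤ m + 1) (x : ℂ) :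
    coeffVec (m + 2) f ⬝ᵥ veron (m + 1) ![x, 1] = f.eval x := by
  rw [eval_eq_sum_range' (Nat.lt_succ_of_le hf), ← Fin.sum_univ_eq_sum_range
    fun i => f.coeff i * x ^ i]
  simp only [veron_affine, dotProduct, coeffVec, LinearMap.pi_apply, lcoeff_apply]

lemma coeffVec_dotProduct_single_last {f : ℂ[X]} (hf : f.natDegree ≤ m) :
    coeffVec (m + 2) f ⬝ᵥ Pi.single (Fin.last (m + 1)) 1 = 0 := by
  rw [dotProduct_single_one]
  exact coeff_eq_zero_of_natDegree_lt (Nat.lt_succ_of_le hf)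

/-- The action of a matrix on linear forms, transported to polynomials by `coeffVec`. -/
def dualAction (θ : Matrix (Fin (m + 2)) (Fin (m + 2)) ℂ) : ℂ[X] →ₗ[ℂ] ℂ[X] :=
  ∑ j : Fin (m + 2), monomial j ∘ₗ .proj j ∘ₗ θ.vecMulLinear ∘ₗ coeffVec (m + 2)

variable {θ : Matrix (Fin (m + 2)) (Fin (m + 2)) ℂ}

lemma dualAction_apply (f : ℂ[X]) :
    dualAction θ f = ∑ j : Fin (m + 2), monomial j ((coeffVec (m + 2) f ᵥ* θ) j) := by
  simp [dualAction]

lemma natDegree_dualAction_le (f : ℂ[X]) : (dualAction θ f).natDegree ≤ m + 1 := by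
  rw [dualAction_apply]
  exact natDegree_sum_le_of_forall_le _ _ fun j _ =>
    (natDegree_monomial_le _).trans (Nat.le_of_lt_succ j.2)

lemma coeff_dualAction (f : ℂ[X]) (j : Fin (m + 2)) :
    (dualAction θ f).coeff j = (coeffVec (m + 2) f ᵥ* θ) j := by
  simp [dualAction_apply, coeff_monomial, Fin.val_inj]

lemma coeff_dualAction_X_pow (i j : Fin (m + 2)) :
    (dualAction θ (X ^ (i : ℕ))).coeff j = θ i j := by
  have : coeffVec (m + 2) (X ^ (i : ℕ)) = Pi.single i 1 := by
    ext k
    simp [coeffVec, coeff_X_pow, Pi.single_apply, Fin.val_inj]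
  rw [coeff_dualAction, this, single_one_vecMul, row]

lemma eval_dualAction (f : ℂ[X]) (x : ℂ) :
    (dualAction θ f).eval x = coeffVec (m + 2) f ⬝ᵥ θ *ᵥ veron (m + 1) ![x, 1] := by
  rw [dotProduct_mulVec, dualAction_apply, eval_finsetSum]
  simp only [eval_monomial, dotProduct, veron_affine]

lemma exists_isScalarAt_dualAction {x : ℂ}
    (h : InvariantMod θ (Pi.single (Fin.last _) 1) (ℂ ∙ veron (m + 1) ![x, 1])) :
    ∃ κ, IsScalarAt (dualAction θ) m x κ := by
  obtain ⟨a, b, hab⟩ := invariantMod_span_singleton_iff.mp h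
  refine ⟨a, fun f hf => ?_⟩
  rw [eval_dualAction, hab, dotProduct_add, dotProduct_smul, dotProduct_smul,
    coeffVec_dotProduct_veron (hf.trans m.le_succ), coeffVec_dotProduct_single_last hf, smul_zero,
    add_zero, smul_eq_mul]

lemma eval_dualAction_nodal_eq_zero {ρ : Fin m → ℂ}
    (h : InvariantMod θ (Pi.single (Fin.last _) 1)
      (LinearMap.range (veronMatrix fun k => ![ρ k, 1]).mulVecLin)) (k : Fin m) :
    (dualAction θ (nodal Finset.univ ρ)).eval (ρ k) = 0 := by
  have hdeg : (nodal Finset.univ ρ).natDegree = m := by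
    rw [natDegree_nodal, Finset.card_univ, Fintype.card_fin]
  let φ := dotProductBilin ℂ ℂ (coeffVec (m + 2) (nodal Finset.univ ρ))
  have hker : LinearMap.range (veronMatrix fun k => ![ρ k, 1]).mulVecLin ⊔
      ℂ ∙ Pi.single (Fin.last (m + 1)) 1 ≤ LinearMap.ker φ := by
    rw [sup_le_iff, range_veronMatrix, Submodule.span_le, Submodule.span_singleton_le_iff_mem]
    refine ⟨?_, coeffVec_dotProduct_single_last hdeg.le⟩
    rintro _ ⟨i, rfl⟩
    exact (coeffVec_dotProduct_veron (hdeg.trans_le m.le_succ) _).trans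
      (eval_nodal_at_node (Finset.mem_univ i))
  rw [eval_dualAction]
  refine hker (h (Submodule.mem_map_of_mem ?_))
  rw [range_veronMatrix]
  exact Submodule.subset_span ⟨k, rfl⟩

lemma mem_span_shift_of_dualAction_eq (hθ : IsNormalized θ) {L : ℂ[X]} (hL : L.natDegree ≤ 1)
    (h : ∀ f : ℂ[X], f.natDegree ≤ m → dualAction θ f = L * f) : θ ∈ ℂ ∙ shift (m + 1) := by
  have hrow {i : Fin (m + 2)} (hi : (i : ℕ) ≤ m) (j : Fin (m + 2)) :
      θ i j = (L * X ^ (i : ℕ)).coeff j := by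
    rw [← h _ ((natDegree_X_pow_le _).trans hi), coeff_dualAction_X_pow]
  have hL0 : L.coeff 0 = 0 := by
    have := hrow (i := 0) m.zero_le 0
    rwa [hθ.2, Fin.val_zero, pow_zero, mul_one, eq_comm] at this
  obtain ⟨c, rfl⟩ : ∃ c, L = C c * X :=
    ⟨L.coeff 1, by
      conv_lhs => rw [eq_X_add_C_of_natDegree_le_one hL, hL0, C_0, add_zero]⟩
  refine Submodule.mem_span_singleton.mpr ⟨c, ?_⟩
  ext i j
  rw [Matrix.smul_apply, smul_eq_mul, shift, of_apply]
  refine Fin.lastCases ?_ (fun i => ?_) i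
  · rw [hθ.1, Fin.val_last, if_neg j.2.ne, mul_zero]
  · rw [hrow (Nat.le_of_lt_succ i.2), mul_assoc, ← pow_succ', coeff_C_mul, coeff_X_pow]

end DualAction

section StandardConfigurations

open Lagrange

variable {m q l : ℕ}

lemma isRigid_veron {μ : Fin q → ℂ} {ρ : Fin l → Fin m → ℂ}
    (hρ : ∀ j, Function.Injective (ρ j))
    (h : ∀ T : ℂ[X] →ₗ[ℂ] ℂ[X], (∀ f, (T f).natDegree ≤ m + 1) →
      (∀ i, ∃ κ, IsScalarAt T m (μ i) κ) →
      (∀ j k, (T (nodal Finset.univ (ρ j))).eval (ρ j k) = 0) →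
      ∃ L : ℂ[X], L.natDegree ≤ 1 ∧ ∀ f : ℂ[X], f.natDegree ≤ m → T f = L * f) :
    IsRigid (fun i => veron (m + 1) ![μ i, 1]) fun j => veronMatrix fun k => ![ρ j k, 1] where
  point_zero_ne i := by simp [veron_affine]
  isIncident :=
    { point := fun i => invariantMod_shift_veron (μ i)
      space := fun j => by
        rw [range_veronMatrix]
        exact invariantMod_span fun k => invariantMod_shift_veron (ρ j k) }
  pluckerForm_ne j := pluckerForm_veronMatrix_shift_ne_zero (hρ j)
  separable j := separable_secantPoly_veronMatrix (hρ j)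
  mem_span := fun {θ} hθ hnorm => by
    obtain ⟨L, hL, hLf⟩ := h (dualAction θ) natDegree_dualAction_le
      (fun i => exists_isScalarAt_dualAction (hθ.point i))
      fun j => eval_dualAction_nodal_eq_zero (hθ.space j)
    exact mem_span_shift_of_dualAction_eq hnorm hL hLf

lemma exists_isRigid_of_zero_spaces (m : ℕ) :
    ∃ (z : Fin (m + 3) → Fin (m + 2) → ℂ) (B : Fin 0 → Matrix (Fin (m + 2)) (Fin m) ℂ),
      IsRigid z B :=
  ⟨_, _, isRigid_veron (μ := fun i => (i : ℕ)) (ρ := fun j => j.elim0) (fun j => j.elim0)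
    fun _ hT hμ _ => exists_eq_mul_of_isScalarAt hT
      (Nat.cast_injective.comp Fin.val_injective) (Fintype.card_fin _) hμ⟩

lemma exists_isRigid_of_one_space (m : ℕ) :
    ∃ (z : Fin (m + 2) → Fin (m + 2) → ℂ) (B : Fin 1 → Matrix (Fin (m + 2)) (Fin m) ℂ),
      IsRigid z B := by
  let ν : Fin (m + 2) ⊕ Fin m → ℂ := fun s => (finSumFinEquiv s : ℕ)
  have hν : Function.Injective ν :=
    Nat.cast_injective.comp (Fin.val_injective.comp finSumFinEquiv.injective)
  exact ⟨_, _, isRigid_veron (μ := ν ∘ .inl) (ρ := fun _ => ν ∘ .inr)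
    (fun _ => hν.comp Sum.inr_injective) fun _ hT hμ hTρ =>
      exists_eq_mul_of_isScalarAt_of_nodal hT (hν.comp Sum.inl_injective) (Fintype.card_fin _) hμ
        (hν.comp Sum.inr_injective) (fun _ _ => hν.ne Sum.inl_ne_inr) (hTρ 0)⟩

lemma exists_isRigid_of_cyclic (hml : m < l) (hlq : l + q = m + 3) :
    ∃ (z : Fin q → Fin (m + 2) → ℂ) (B : Fin l → Matrix (Fin (m + 2)) (Fin m) ℂ),
      IsRigid z B := by
  have : NeZero l := ⟨by omega⟩
  let e : Fin l ≃ ZMod l := (ZMod.finEquiv l).toEquiv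
  let ν : ZMod l ⊕ Fin q → ℂ := fun s => (finSumFinEquiv (Sum.map e.symm id s) : ℕ)
  have hν : Function.Injective ν := Nat.cast_injective.comp <| Fin.val_injective.comp <|
    finSumFinEquiv.injective.comp <| Sum.map_injective.mpr ⟨e.symm.injective, Function.injective_id⟩
  have hν' := hν.comp Sum.inl_injective
  refine ⟨_, _, isRigid_veron (μ := ν ∘ .inr) (ρ := fun j => cyclicWindow (ν ∘ .inl) m (e j))
    (fun j => cyclicWindow_injective hν' hml _) fun T hT hμ hTρ =>
      exists_eq_mul_of_isScalarAt hT hν (by simp [ZMod.card, hlq]) (Sum.rec (fun i => ?_) hμ)⟩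
  refine exists_isScalarAt_of_cyclicWindow hν' hml (fun j k => ?_) i
  have := hTρ (e.symm j) k
  rwa [e.apply_symm_apply] at this

end StandardConfigurations

section CrossRatio

variable {m : ℕ}

lemma exists_pluckerForm_eq_mul_bracket (hm : 1 ≤ m) {M : Matrix (Fin (m + 2)) (Fin (m + 2)) ℂ}
    (hM : IsUnit M.det) {B : Matrix (Fin (m + 2)) (Fin m) ℂ} (hB : B.rank = m)
    (hcard : (curve M ∩ projSet B).ncard = m) :
    ∃ (c : ℂ) (h : (Fin 2 → ℂ) → ℂ), ∀ a b,
      pluckerForm B (M *ᵥ veron (m + 1) a) (M *ᵥ veron (m + 1) b) =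
        c * (bracket b a * (h a * h b)) := by
  obtain ⟨v, -, -, hspan⟩ := exists_span_veron_eq_range hm (by omega) hM hB hcard
  have hcol (k : Fin m) : ∃ y, (M * veronMatrix v) *ᵥ y = B.col k := by
    suffices B.col k ∈ LinearMap.range (M * veronMatrix v).mulVecLin from this
    rw [range_mulVecLin]
    refine hspan.ge ?_
    rw [range_mulVecLin]
    exact Submodule.subset_span ⟨k, rfl⟩
  choose y hy using hcol
  have hfactor : M * veronMatrix v * (of y)ᵀ = B := ext_col hy
  refine ⟨M.det * (of y)ᵀ.det * ∏ i, ∏ j ∈ Finset.Ioi i, bracket (v j) (v i),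
    fun a => ∏ k, bracket (v k) a, fun a b => ?_⟩
  rw [← hfactor, pluckerForm_mul_right, pluckerForm_mul_left, pluckerForm_veronMatrix]
  ring

/-- The cleared-denominator difference of the cross ratios of the images of four points under the
projections to `ℙ¹` from the subspaces `B 0` and `B 1`. -/
def crossRatioDefect (B : Fin 2 → Matrix (Fin (m + 2)) (Fin m) ℂ)
    (p : Fin 4 → Fin (m + 2) → ℂ) : ℂ :=
  pluckerForm (B 0) (p 0) (p 1) * pluckerForm (B 0) (p 2) (p 3) *
      (pluckerForm (B 1) (p 0) (p 2) * pluckerForm (B 1) (p 1) (p 3)) -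
    pluckerForm (B 1) (p 0) (p 1) * pluckerForm (B 1) (p 2) (p 3) *
      (pluckerForm (B 0) (p 0) (p 2) * pluckerForm (B 0) (p 1) (p 3))

lemma IsPolynomialFun.crossRatioDefect {σ : Type*}
    {B : (σ → ℂ) → Fin 2 → Matrix (Fin (m + 2)) (Fin m) ℂ} {p : (σ → ℂ) → Fin 4 → Fin (m + 2) → ℂ}
    (hB : ∀ j r k, IsPolynomialFun fun x => B x j r k)
    (hp : ∀ i r, IsPolynomialFun fun x => p x i r) :
    IsPolynomialFun fun x => crossRatioDefect (B x) (p x) :=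
  have h (j i i') : IsPolynomialFun fun x => _root_.pluckerForm (B x j) (p x i) (p x i') :=
    pluckerForm (hB j) (hp i) (hp i')
  (((h 0 0 1).mul (h 0 2 3)).mul ((h 1 0 2).mul (h 1 1 3))).sub
    (((h 1 0 1).mul (h 1 2 3)).mul ((h 0 0 2).mul (h 0 1 3)))

lemma crossRatioDefect_eq_zero (hm : 1 ≤ m) {M : Matrix (Fin (m + 2)) (Fin (m + 2)) ℂ}
    (hM : IsUnit M.det) {B : Fin 2 → Matrix (Fin (m + 2)) (Fin m) ℂ} (hB : ∀ j, (B j).rank = m)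
    (hcard : ∀ j, (curve M ∩ projSet (B j)).ncard = m) {p : Fin 4 → Fin (m + 2) → ℂ}
    (hp : ∀ i, p i ∈ cone M) : crossRatioDefect B p = 0 := by
  choose c h hform using fun j => exists_pluckerForm_eq_mul_bracket hm hM (hB j) (hcard j)
  choose v _ d _ hpv using hp
  simp only [crossRatioDefect, hpv, map_smul, pluckerForm_smul_left, smul_eq_mul,
    hform]
  ring

/-- A subspace complementary to the line `e₀e₁`, which meets the line `e₁eᵢ` for each `i ≥ 2` in
the point `t e₁ + eᵢ`. -/
def slantMatrix (m : ℕ) (t : ℂ) : Matrix (Fin (m + 2)) (Fin m) ℂ :=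
  of fun r k => (Pi.single k.succ.succ 1 + t • Pi.single 1 1 : Fin (m + 2) → ℂ) r

lemma pluckerForm_slantMatrix_zero_one (t : ℂ) :
    pluckerForm (slantMatrix m t) (Pi.single 0 1) (Pi.single 1 1) = 1 := by
  rw [pluckerForm_apply, det_of_isLowerTriangular]
  · refine Finset.prod_eq_one fun i _ => Fin.cases ?_ (Fin.cases ?_ fun k => ?_) i
    · exact Pi.single_eq_same (M := fun _ => ℂ) 0 1
    · exact Pi.single_eq_same (M := fun _ => ℂ) 1 1
    · change (Pi.single k.succ.succ 1 + t • Pi.single 1 1 : Fin (m + 2) → ℂ) k.succ.succ = 1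
      rw [Pi.add_apply, Pi.smul_apply, Pi.single_eq_same,
        Pi.single_eq_of_ne (Fin.succ_succ_ne_one k), smul_zero, add_zero]
  · intro i j (hij : i < j)
    refine Fin.cases (fun h0 => ?_) (Fin.cases (fun h1 => ?_) fun k hk => ?_) i hij
    · exact Pi.single_eq_of_ne h0.ne' 1
    · exact Pi.single_eq_of_ne h1.ne' 1
    · have h1 : (1 : Fin (m + 2)) < j := lt_of_le_of_lt (by simp [Fin.le_def]) hk
      change (Pi.single k.succ.succ 1 + t • Pi.single 1 1 : Fin (m + 2) → ℂ) j = 0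
      rw [Pi.add_apply, Pi.smul_apply, Pi.single_eq_of_ne hk.ne', Pi.single_eq_of_ne h1.ne',
        smul_zero, add_zero]

lemma exists_crossRatioDefect_ne_zero (hm : 1 ≤ m) :
    ∃ (B : Fin 2 → Matrix (Fin (m + 2)) (Fin m) ℂ) (p : Fin 4 → Fin (m + 2) → ℂ),
      crossRatioDefect B p ≠ 0 := by
  let e (i : Fin (m + 2)) : Fin (m + 2) → ℂ := Pi.single i 1
  let k : Fin m := ⟨0, hm⟩
  have h01 (t : ℂ) : pluckerForm (slantMatrix m t) (e 0) (e 1) = 1 :=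
    pluckerForm_slantMatrix_zero_one t
  have h10 (t : ℂ) : pluckerForm (slantMatrix m t) (e 1) (e 0) = -1 := by
    rw [pluckerForm_swap, h01]
  have hk (t : ℂ) (u : Fin (m + 2) → ℂ) : pluckerForm (slantMatrix m t) u (e k.succ.succ) =
      -(t * pluckerForm (slantMatrix m t) u (e 1)) := by
    have hmem : e k.succ.succ + t • e 1 ∈ LinearMap.range (slantMatrix m t).mulVecLin :=
      ⟨Pi.single k 1, mulVec_single_one (slantMatrix m t) k⟩
    have := pluckerForm_eq_zero_of_mem_range (u := u) hmem
    rwa [map_add, map_smul, smul_eq_mul, add_eq_zero_iff_eq_neg] at this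
  have hsum (t : ℂ) : pluckerForm (slantMatrix m t) (e 0 + e 1) (e 0 + e k.succ.succ) =
      -1 - t := by
    rw [map_add, hk, pluckerForm_swap (e 0), pluckerForm_swap (e 1), map_add, map_add,
      pluckerForm_self, pluckerForm_self, h01, h10]
    ring
  refine ⟨fun j => slantMatrix m j, ![e 0, e 1, e 0 + e 1, e 0 + e k.succ.succ], ?_⟩
  simp [crossRatioDefect, hsum, h01, h10, hk, pluckerForm_self]

lemma genHoldsPtsCodim2_not_exists {p l : ℕ} (hm : 1 ≤ m) (hp : 4 ≤ p) (hl : 2 ≤ l) :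
    GenHoldsPtsCodim2 (m + 1) p l fun P B =>
      ¬ ∃ C : Set (PP (m + 1)), IsRNC (m + 1) C ∧ (∀ i, projSet (P i) ⊆ C) ∧
        ∀ j, (C ∩ projSet (B j)).ncard = m := by
  obtain ⟨B₀, p₀, hne⟩ := exists_crossRatioDefect_ne_zero hm
  let P : Fin p → Matrix (Fin (m + 2)) (Fin 1) ℂ :=
    Function.extend (Fin.castLE hp) (fun i => replicateCol _ (p₀ i)) 0
  let B : Fin l → Matrix (Fin (m + 2)) (Fin m) ℂ := Function.extend (Fin.castLE hl) B₀ 0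
  have hP (i : Fin 4) : (P (Fin.castLE hp i)).col 0 = p₀ i :=
    congrArg (fun A : Matrix (Fin (m + 2)) (Fin 1) ℂ => A.col 0)
      ((Fin.castLE_injective hp).extend_apply _ _ i)
  have hB (j : Fin 2) : B (Fin.castLE hl j) = B₀ j := (Fin.castLE_injective hl).extend_apply ..
  let δ (x : EntryIndex (m + 1) p l → ℂ) : ℂ :=
    crossRatioDefect (fun j => spaceMatrix x (Fin.castLE hl j))
      fun i => (pointMatrix x (Fin.castLE hp i)).col 0
  have hδ : IsPolynomialFun δ := .crossRatioDefect (fun j => isPolynomialFun_spaceMatrix _)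
    fun i r => isPolynomialFun_pointMatrix _ r 0
  have hδ₀ : δ (entries P B) ≠ 0 := by
    change crossRatioDefect (fun j => B (Fin.castLE hl j))
      (fun i => (P (Fin.castLE hp i)).col 0) ≠ 0
    simpa only [hP, hB] using hne
  refine genHoldsPtsCodim2_of_eventually (P := P) (B := B) ?_
  filter_upwards [hδ.eventually_ne hδ₀] with x hx hPrank hBrank
  rintro ⟨_, ⟨M, hM, rfl⟩, hpoint, hspace⟩
  exact hx (crossRatioDefect_eq_zero hm hM (fun j => hBrank _) (fun j => hspace _)
    fun i => (projSet_subset_curve_iff (hPrank _)).mp (hpoint _))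

end CrossRatio

end

theorem points_and_codim_two_spaces_general (n p l : ℕ) (hn : 2 ≤ n) :
    (((p = n + 3 ∧ l = 0) ∨ (p = n + 2 ∧ l = 1) ∨ (p = 3 ∧ l = n) ∨
        (p = 2 ∧ l = n + 1) ∨ (p = 1 ∧ l = n + 2)) →
      GenHoldsPtsCodim2 n p l fun P B =>
        ∃! C : Set (PP n), IsRNC n C ∧ (∀ i, projSet (P i) ⊆ C) ∧
          ∀ j, (C ∩ projSet (B j)).ncard = n - 1) ∧
    ((4 ≤ p ∧ 2 ≤ l) →
      GenHoldsPtsCodim2 n p l fun P B =>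
        ¬ ∃ C : Set (PP n), IsRNC n C ∧ (∀ i, projSet (P i) ⊆ C) ∧
          ∀ j, (C ∩ projSet (B j)).ncard = n - 1) := by
  obtain ⟨m, rfl⟩ : ∃ m, n = m + 1 := ⟨n - 1, by omega⟩
  have hm : 1 ≤ m := Nat.le_of_succ_le_succ hn
  refine ⟨fun hcases => ?_, fun ⟨hp, hl⟩ => genHoldsPtsCodim2_not_exists hm hp hl⟩
  obtain ⟨q, rfl, hql, z, B, hrigid⟩ : ∃ q, p = q + 1 ∧ q + l = m + 3 ∧
      ∃ (z : Fin q → Fin (m + 2) → ℂ) (B : Fin l → Matrix (Fin (m + 2)) (Fin m) ℂ),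
        IsRigid z B := by
    rcases hcases with ⟨rfl, rfl⟩ | ⟨rfl, rfl⟩ | ⟨rfl, rfl⟩ | ⟨rfl, rfl⟩ | ⟨rfl, rfl⟩
    · exact ⟨m + 3, rfl, rfl, exists_isRigid_of_zero_spaces m⟩
    · exact ⟨m + 2, rfl, rfl, exists_isRigid_of_one_space m⟩
    · exact ⟨2, rfl, by omega, exists_isRigid_of_cyclic (by omega) rfl⟩
    · exact ⟨1, rfl, by omega, exists_isRigid_of_cyclic (by omega) rfl⟩
    · exact ⟨0, rfl, by omega, exists_isRigid_of_cyclic (by omega) rfl⟩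
  exact hrigid.genHoldsPtsCodim2_existsUnique hm hql

/-- Rational normal curves through `p` generic points and `(n-1)`-secant to `l` generic
codimension-two subspaces of `ℙⁿ`, with `p + l = n + 3`: for
`(p,l) = (n+3,0), (n+2,1), (3,n), (2,n+1), (1,n+2)` there generically exists a unique
such curve; for `p ≥ 4` and `l ≥ 2` generically no such curve exists. -/
theorem points_and_codim_two_spaces (n p l : ℕ) (hn : 3 ≤ n) (hp : 1 ≤ p)
    (hpl : p + l = n + 3) :
    (((p = n + 3 ∧ l = 0) ∨ (p = n + 2 ∧ l = 1) ∨ (p = 3 ∧ l = n) ∨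
        (p = 2 ∧ l = n + 1) ∨ (p = 1 ∧ l = n + 2)) →
      GenHoldsPtsCodim2 n p l fun P B =>
        ∃! C : Set (PP n), IsRNC n C ∧ (∀ i, projSet (P i) ⊆ C) ∧
          ∀ j, (C ∩ projSet (B j)).ncard = n - 1) ∧
    ((4 ≤ p ∧ 2 ≤ l) →
      GenHoldsPtsCodim2 n p l fun P B =>
        ¬ ∃ C : Set (PP n), IsRNC n C ∧ (∀ i, projSet (P i) ⊆ C) ∧
          ∀ j, (C ∩ projSet (B j)).ncard = n - 1) :=
  points_and_codim_two_spaces_general n p l (by omega)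

end
end
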